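/- arXiv:1801.00186 — 2 statements merged into one kernel-verified Lean document; each statement's English description precedes it below -/
import Mathlib

section
/- Let S ⊆ ℝ^n be a Borel measurable set and let μ > −1 be real. Then ∫_{S^{n-1}} ∫_ℝ V_{n-1}(S ∩ (θ^⊥ + tθ)) · |t|^μ dt d*θ = (Γ(n/2)/Γ(1/2)) · (Γ((μ+1)/2)/Γ((μ+n)/2)) · ∫_S |x|^μ dx, the equality holding in [0,∞]. (Case k = n−1, p = 1 of the paper's exact weighted identity for volumes of affine cross-sections of a measurable set.) -/
open MeasureTheory Metric Real
open scoped ENNReal NNReal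

noncomputable section

/-- The normalized (probability) surface measure `d*θ` on the unit sphere of
`EuclideanSpace ℝ (Fin n)`. -/
def sphMeasure (n : ℕ) : Measure (sphere (0 : EuclideanSpace ℝ (Fin n)) 1) :=
  ((volume : Measure (EuclideanSpace ℝ (Fin n))).toSphere Set.univ)⁻¹ •
    (volume : Measure (EuclideanSpace ℝ (Fin n))).toSphere

/-- The hyperplane Radon transform: `Rf(θ,t) = ∫_{θ^⊥} f(tθ + y) dy`, where `θ^⊥` carries its
canonical Lebesgue measure as an (n-1)-dimensional inner product space. -/
def Radon (n : ℕ) (f : EuclideanSpace ℝ (Fin n) → ℝ≥0∞)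
    (θ : sphere (0 : EuclideanSpace ℝ (Fin n)) 1) (t : ℝ) : ℝ≥0∞ :=
  ∫⁻ y : ((ℝ ∙ (θ : EuclideanSpace ℝ (Fin n)))ᗮ),
    f (t • (θ : EuclideanSpace ℝ (Fin n)) + (y : EuclideanSpace ℝ (Fin n)))

/-- `V_{n-1}(S ∩ (θ^⊥ + tθ))`: the (n-1)-dimensional Lebesgue measure, computed in `θ^⊥`,
of the section of `S` by the affine hyperplane `θ^⊥ + tθ`. -/
def sectVol (n : ℕ) (S : Set (EuclideanSpace ℝ (Fin n)))
    (θ : sphere (0 : EuclideanSpace ℝ (Fin n)) 1) (t : ℝ) : ℝ≥0∞ :=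
  volume {y : ((ℝ ∙ (θ : EuclideanSpace ℝ (Fin n)))ᗮ) |
    t • (θ : EuclideanSpace ℝ (Fin n)) + (y : EuclideanSpace ℝ (Fin n)) ∈ S}

theorem aux_decomp (n : ℕ) (θ : EuclideanSpace ℝ (Fin n)) (hθ : ‖θ‖ = 1)
    (f : EuclideanSpace ℝ (Fin n) → ℝ≥0∞) (hf : Measurable f) :
    ∫⁻ t : ℝ, ∫⁻ y : ((ℝ ∙ θ)ᗮ), f (t • θ + (y : EuclideanSpace ℝ (Fin n))) = ∫⁻ x, f x := by
  have h1 : MeasurePreserving (fun p : ℝ × ((ℝ ∙ θ)ᗮ) =>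
      ((LinearIsometryEquiv.toSpanUnitSingleton θ hθ p.1, p.2) : (ℝ ∙ θ) × ((ℝ ∙ θ)ᗮ))) :=
    (LinearIsometryEquiv.measurePreserving (LinearIsometryEquiv.toSpanUnitSingleton θ hθ)).prod
      (MeasurePreserving.id volume)
  have h2 := ((LinearIsometryEquiv.measurePreserving
    ((ℝ ∙ θ).orthogonalDecomposition.symm)).comp
      (WithLp.volume_preserving_toLp (ℝ ∙ θ) ((ℝ ∙ θ)ᗮ))).comp h1
  rw [← h2.lintegral_comp hf, Measure.volume_eq_prod, lintegral_prod]
  · refine lintegral_congr fun t => lintegral_congr fun y => ?_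
    congr 1
  · exact (hf.comp h2.measurable).aemeasurable

theorem aux_gamma (q : ℝ) (hq : -1 < q) :
    ∫⁻ r in Set.Ioi (0 : ℝ), ENNReal.ofReal r ^ q * ENNReal.ofReal (Real.exp (-r ^ 2)) =
      ENNReal.ofReal (Real.Gamma ((q + 1) / 2) / 2) := by
  have h := integral_rpow_mul_exp_neg_rpow (p := 2) (q := q) (by norm_num) hq
  have hpos : 0 < Real.Gamma ((q + 1) / 2) := Real.Gamma_pos_of_pos (by linarith)
  have hi : Integrable (fun x : ℝ => x ^ q * Real.exp (-x ^ (2 : ℝ)))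
      (volume.restrict (Set.Ioi 0)) := by
    by_contra hc
    rw [integral_undef hc] at h
    have : 0 < 1 / 2 * Real.Gamma ((q + 1) / 2) := by positivity
    linarith
  have e : Real.Gamma ((q + 1) / 2) / 2 = ∫ x in Set.Ioi (0 : ℝ), x ^ q * Real.exp (-x ^ (2 : ℝ)) := by
    rw [h]; ring
  rw [e, ofReal_integral_eq_lintegral_ofReal hi]
  · refine setLIntegral_congr_fun measurableSet_Ioi fun x hx => ?_
    have hx : 0 < x := hx
    rw [ENNReal.ofReal_mul (by positivity), ENNReal.ofReal_rpow_of_pos hx]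
    simp
  · filter_upwards [ae_restrict_mem measurableSet_Ioi] with x hx
    have hx : 0 < x := hx
    simp only [Pi.zero_apply]
    positivity

theorem aux_gamma_line (q : ℝ) (hq : -1 < q) :
    ∫⁻ r : ℝ, ENNReal.ofReal |r| ^ q * ENNReal.ofReal (Real.exp (-r ^ 2)) =
      ENNReal.ofReal (Real.Gamma ((q + 1) / 2)) := by
  have hpos : 0 < Real.Gamma ((q + 1) / 2) := Real.Gamma_pos_of_pos (by linarith)
  have hI : ∫⁻ r in Set.Ioi (0 : ℝ), ENNReal.ofReal |r| ^ q * ENNReal.ofReal (Real.exp (-r ^ 2)) =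
      ENNReal.ofReal (Real.Gamma ((q + 1) / 2) / 2) := by
    rw [← aux_gamma q hq]
    refine setLIntegral_congr_fun measurableSet_Ioi fun x hx => ?_
    have hx : 0 < x := hx
    simp only [abs_of_pos hx]
  have hI2 : ∫⁻ r in Set.Iio (0 : ℝ), ENNReal.ofReal |r| ^ q * ENNReal.ofReal (Real.exp (-r ^ 2)) =
      ENNReal.ofReal (Real.Gamma ((q + 1) / 2) / 2) := by
    rw [← hI]
    have := (Measure.measurePreserving_neg (volume : Measure ℝ)).setLIntegral_comp_preimage
      (s := Set.Ioi 0) (f := fun r : ℝ => ENNReal.ofReal |r| ^ q *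
        ENNReal.ofReal (Real.exp (-r ^ 2))) measurableSet_Ioi (by fun_prop)
    rw [← this]
    simp
  rw [← lintegral_add_compl _ (measurableSet_Ioi (a := (0 : ℝ))), Set.compl_Ioi,
    restrict_Iio_eq_restrict_Iic.symm, hI, hI2, ← ENNReal.ofReal_add (by positivity) (by positivity)]
  congr 1; ring

theorem aux_polar (n : ℕ) (hn : 2 ≤ n)
    (f : EuclideanSpace ℝ (Fin n) → ℝ≥0∞) (hf : Measurable f) :
    ∫⁻ x, f x = ∫⁻ θ, ∫⁻ r in Set.Ioi (0 : ℝ), ENNReal.ofReal (r ^ (n - 1)) *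
      f (r • (θ : EuclideanSpace ℝ (Fin n))) ∂volume
      ∂((volume : Measure (EuclideanSpace ℝ (Fin n))).toSphere) := by
  have : Nontrivial (EuclideanSpace ℝ (Fin n)) := by
    have : Nonempty (Fin n) := ⟨⟨0, by omega⟩⟩
    infer_instance
  have hp := (volume : Measure (EuclideanSpace ℝ (Fin n))).measurePreserving_homeomorphUnitSphereProd
  have hm : Measurable (fun p : sphere (0 : EuclideanSpace ℝ (Fin n)) 1 × Set.Ioi (0 : ℝ) =>
      f (p.2.1 • p.1.1)) := hf.comp (by fun_prop)
  calc ∫⁻ x, f x = ∫⁻ x : ({(0)}ᶜ : Set (EuclideanSpace ℝ (Fin n))), f x.1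
        ∂(Measure.comap Subtype.val volume) := by
        rw [lintegral_subtype_comap (measurableSet_singleton _).compl,
          restrict_compl_singleton]
    _ = ∫⁻ p : sphere (0 : EuclideanSpace ℝ (Fin n)) 1 × Set.Ioi (0 : ℝ), f (p.2.1 • p.1.1)
          ∂((volume : Measure (EuclideanSpace ℝ (Fin n))).toSphere.prod
            (.volumeIoiPow (Module.finrank ℝ (EuclideanSpace ℝ (Fin n)) - 1))) := by
        rw [← hp.lintegral_comp hm]
        refine lintegral_congr fun x => ?_
        congr 1
        have hx : ‖x.1‖ ≠ 0 := norm_ne_zero_iff.2 x.2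
        simp [smul_smul, hx]
    _ = _ := by
        rw [lintegral_prod _ hm.aemeasurable]
        refine lintegral_congr fun θ => ?_
        rw [Measure.volumeIoiPow, lintegral_withDensity_eq_lintegral_mul _ (by fun_prop)
          (show Measurable fun y : Set.Ioi (0 : ℝ) => f ((θ, y).2.1 • (θ, y).1.1) from
            hm.comp measurable_prodMk_left)]
        simp only [Pi.mul_apply, finrank_euclideanSpace, Fintype.card_fin, Function.comp_def]
        rw [lintegral_subtype_comap measurableSet_Ioi
          (fun r : ℝ => ENNReal.ofReal (r ^ (n - 1)) * f (r • θ.1))]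

/-- Gaussian integral of `|⟨x, y⟩|^q` in polar coordinates and by slicing. -/
theorem aux_key (n : ℕ) (hn : 2 ≤ n) (q : ℝ) (hq : -1 < q) (θ : EuclideanSpace ℝ (Fin n))
    (hθ : ‖θ‖ = 1) :
    (∫⁻ ω, ENNReal.ofReal |inner ℝ θ ω.1| ^ q
      ∂((volume : Measure (EuclideanSpace ℝ (Fin n))).toSphere)) *
      ENNReal.ofReal (Real.Gamma ((q + n) / 2) / 2) =
    ENNReal.ofReal (Real.Gamma ((q + 1) / 2)) *
      ∫⁻ y : ((ℝ ∙ θ)ᗮ), ENNReal.ofReal (Real.exp (-‖y‖ ^ 2)) := by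
  have hm : Measurable (fun x : EuclideanSpace ℝ (Fin n) =>
    ENNReal.ofReal |inner ℝ θ x| ^ q * ENNReal.ofReal (Real.exp (-‖x‖ ^ 2))) := by fun_prop
  have h1 := aux_polar n hn _ hm
  have h2 := aux_decomp n θ hθ _ hm
  have h1' : ∫⁻ θ', ∫⁻ r in Set.Ioi (0 : ℝ), ENNReal.ofReal (r ^ (n - 1)) *
      (ENNReal.ofReal |inner ℝ θ (r • θ'.1)| ^ q * ENNReal.ofReal (Real.exp (-‖r • θ'.1‖ ^ 2))) ∂volume
      ∂((volume : Measure (EuclideanSpace ℝ (Fin n))).toSphere) =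
      (∫⁻ ω, ENNReal.ofReal |inner ℝ θ ω.1| ^ q
      ∂((volume : Measure (EuclideanSpace ℝ (Fin n))).toSphere)) *
      ENNReal.ofReal (Real.Gamma ((q + n) / 2) / 2) := by
    rw [← lintegral_mul_const _ (by fun_prop)]
    refine lintegral_congr fun ω => ?_
    have hn' : ((n - 1 : ℕ) : ℝ) = n - 1 := by rw [Nat.cast_sub (by omega)]; simp
    have hn2 : (2 : ℝ) ≤ n := by exact_mod_cast hn
    have := aux_gamma (q + (n - 1 : ℕ)) (by rw [hn']; linarith)
    rw [show q + ((n - 1 : ℕ) : ℝ) + 1 = q + n by rw [hn']; ring] at this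
    rw [← this, ← lintegral_const_mul _ (by fun_prop)]
    refine setLIntegral_congr_fun measurableSet_Ioi fun r hr => ?_
    have hr : 0 < r := hr
    have hω : ‖ω.1‖ = 1 := by simp
    simp only [inner_smul_right, norm_smul, hω, Real.norm_eq_abs, abs_mul, abs_of_pos hr, mul_one]
    rw [ENNReal.ofReal_mul hr.le, ENNReal.mul_rpow_of_ne_top (by simp) (by simp),
      ENNReal.rpow_add _ _ (by simpa using hr) (by simp), ENNReal.rpow_natCast,
      ENNReal.ofReal_pow hr.le]
    ring
  rw [← h1', ← h1, ← h2, ← aux_gamma_line q hq, ← lintegral_mul_const _ (by fun_prop)]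
  refine lintegral_congr fun t => ?_
  rw [← lintegral_const_mul _ (by fun_prop)]
  refine lintegral_congr fun y => ?_
  have hy : inner ℝ θ (y : EuclideanSpace ℝ (Fin n)) = 0 :=
    Submodule.mem_orthogonal_singleton_iff_inner_right.1 y.2
  have hin : inner ℝ θ (t • θ + (y : EuclideanSpace ℝ (Fin n))) = t := by
    rw [inner_add_right, hy, inner_smul_right, real_inner_self_eq_norm_sq, hθ]; simp
  have hnorm : ‖t • θ + (y : EuclideanSpace ℝ (Fin n))‖ ^ 2 = t ^ 2 + ‖y‖ ^ 2 := by
    rw [norm_add_sq_real, inner_smul_left, hy, norm_smul, hθ]; simp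
  rw [hin, hnorm, neg_add, Real.exp_add, ENNReal.ofReal_mul (by positivity)]
  ring

theorem aux_sphere (n : ℕ) (hn : 2 ≤ n) (μ : ℝ) (hμ : -1 < μ) (x : EuclideanSpace ℝ (Fin n))
    (hx : x ≠ 0) :
    ((volume : Measure (EuclideanSpace ℝ (Fin n))).toSphere Set.univ)⁻¹ *
      (∫⁻ ω, ENNReal.ofReal |inner ℝ x ω.1| ^ μ
      ∂((volume : Measure (EuclideanSpace ℝ (Fin n))).toSphere)) =
      ENNReal.ofReal (Real.Gamma ((n : ℝ) / 2) / Real.Gamma (1 / 2) *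
          (Real.Gamma ((μ + 1) / 2) / Real.Gamma ((μ + n) / 2))) * ENNReal.ofReal ‖x‖ ^ μ := by
  have hx0 : 0 < ‖x‖ := norm_pos_iff.2 hx
  have hn2 : (2 : ℝ) ≤ n := by exact_mod_cast hn
  set θ : EuclideanSpace ℝ (Fin n) := ‖x‖⁻¹ • x with hθd
  have hθ : ‖θ‖ = 1 := by rw [hθd, norm_smul]; simp [hx0.ne']
  have hxθ : x = ‖x‖ • θ := by rw [hθd, smul_smul]; simp [hx0.ne']
  have hI : ∫⁻ ω, ENNReal.ofReal |inner ℝ x ω.1| ^ μ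
      ∂((volume : Measure (EuclideanSpace ℝ (Fin n))).toSphere) =
      ENNReal.ofReal ‖x‖ ^ μ * ∫⁻ ω, ENNReal.ofReal |inner ℝ θ ω.1| ^ μ
      ∂((volume : Measure (EuclideanSpace ℝ (Fin n))).toSphere) := by
    rw [← lintegral_const_mul _ (by fun_prop)]
    refine lintegral_congr fun ω => ?_
    conv_lhs => rw [hxθ]
    rw [inner_smul_left, abs_mul, ENNReal.ofReal_mul (by positivity),
      ENNReal.mul_rpow_of_ne_top (by simp) (by simp)]
    simp
  have k0 := aux_key n hn 0 (by norm_num) θ hθ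
  have k1 := aux_key n hn μ hμ θ hθ
  have hfin : (volume : Measure (EuclideanSpace ℝ (Fin n))).toSphere Set.univ ≠ ⊤ :=
    measure_ne_top _ _
  have hne : (volume : Measure (EuclideanSpace ℝ (Fin n))).toSphere Set.univ ≠ 0 := by
    have : Nontrivial (EuclideanSpace ℝ (Fin n)) := ⟨x, 0, hx⟩
    rw [Measure.measure_univ_ne_zero]
    exact Measure.toSphere_ne_zero _
  rw [hI]
  simp only [ENNReal.rpow_zero, lintegral_const, one_mul, zero_add] at k0
  generalize (volume : Measure (EuclideanSpace ℝ (Fin n))).toSphere Set.univ = s at *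
  generalize (∫⁻ y : ((ℝ ∙ θ)ᗮ), ENNReal.ofReal (Real.exp (-‖y‖ ^ 2))) = A at *
  generalize (∫⁻ ω, ENNReal.ofReal |inner ℝ θ ω.1| ^ μ
      ∂((volume : Measure (EuclideanSpace ℝ (Fin n))).toSphere)) = I at *
  have g1 : 0 < Real.Gamma ((n : ℝ) / 2) := Real.Gamma_pos_of_pos (by linarith)
  have g2 : 0 < Real.Gamma (1 / 2) := Real.Gamma_pos_of_pos (by norm_num)
  have g3 : 0 < Real.Gamma ((μ + 1) / 2) := Real.Gamma_pos_of_pos (by linarith)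
  have g4 : 0 < Real.Gamma ((μ + n) / 2) := Real.Gamma_pos_of_pos (by linarith)
  generalize Real.Gamma ((n : ℝ) / 2) = a at *
  generalize Real.Gamma (1 / 2) = b at *
  generalize Real.Gamma ((μ + 1) / 2) = c at *
  generalize Real.Gamma ((μ + n) / 2) = d at *
  have hA : A = s * ENNReal.ofReal (a / 2 / b) := by
    rw [ENNReal.ofReal_div_of_pos g2, ← mul_div_assoc, k0]
    rw [ENNReal.eq_div_iff (by simpa using g2) (by simp)]
  have hI' : I = s * ENNReal.ofReal (a / b * (c / d)) := by
    have : I = ENNReal.ofReal c * A / ENNReal.ofReal (d / 2) := by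
      rw [ENNReal.eq_div_iff (by simpa using g4) (by simp), ← k1, mul_comm]
    rw [this, hA, ← mul_assoc, mul_comm (ENNReal.ofReal c) s, mul_assoc, mul_div_assoc,
      ← ENNReal.ofReal_mul g3.le, ← ENNReal.ofReal_div_of_pos (by positivity)]
    congr 2
    field_simp
  rw [hI', mul_left_comm (ENNReal.ofReal ‖x‖ ^ μ), ← mul_assoc, ENNReal.inv_mul_cancel hne hfin,
    one_mul, mul_comm]

/-- Exact weighted identity for volumes of hyperplane cross-sections of a Borel measurable set
(case `k = n-1`, `p = 1`). -/
theorem stmt9 (n : ℕ) (hn : 2 ≤ n) (S : Set (EuclideanSpace ℝ (Fin n))) (hS : MeasurableSet S)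
    (μ : ℝ) (hμ : -1 < μ) :
    (∫⁻ θ, ∫⁻ t : ℝ, sectVol n S θ t * ENNReal.ofReal |t| ^ μ ∂volume ∂(sphMeasure n)) =
      ENNReal.ofReal (Real.Gamma ((n : ℝ) / 2) / Real.Gamma (1 / 2) *
          (Real.Gamma ((μ + 1) / 2) / Real.Gamma ((μ + n) / 2))) *
        ∫⁻ x in S, ENNReal.ofReal ‖x‖ ^ μ := by
  have hn1 : Nontrivial (EuclideanSpace ℝ (Fin n)) := by
    have : Nonempty (Fin n) := ⟨⟨0, by omega⟩⟩
    infer_instance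
  have step1 : ∀ θ : sphere (0 : EuclideanSpace ℝ (Fin n)) 1,
      ∫⁻ t : ℝ, sectVol n S θ t * ENNReal.ofReal |t| ^ μ =
        ∫⁻ x in S, ENNReal.ofReal |inner ℝ x θ.1| ^ μ := by
    intro θ
    have hθ : ‖θ.1‖ = 1 := by simp
    have hm : Measurable (S.indicator fun x : EuclideanSpace ℝ (Fin n) =>
        ENNReal.ofReal |inner ℝ x θ.1| ^ μ) := by
      refine Measurable.indicator ?_ hS
      fun_prop
    rw [← lintegral_indicator hS, ← aux_decomp n θ.1 hθ _ hm]
    refine lintegral_congr fun t => ?_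
    have hms : MeasurableSet {y : ((ℝ ∙ (θ : EuclideanSpace ℝ (Fin n)))ᗮ) |
        t • (θ : EuclideanSpace ℝ (Fin n)) + (y : EuclideanSpace ℝ (Fin n)) ∈ S} := by
      refine measurableSet_preimage (f := fun y : ((ℝ ∙ (θ : EuclideanSpace ℝ (Fin n)))ᗮ) =>
        t • (θ : EuclideanSpace ℝ (Fin n)) + (y : EuclideanSpace ℝ (Fin n))) ?_ hS
      fun_prop
    rw [sectVol, mul_comm, ← lintegral_indicator_const hms]
    refine lintegral_congr fun y => ?_
    have hy : inner ℝ (y : EuclideanSpace ℝ (Fin n)) θ.1 = 0 :=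
      Submodule.mem_orthogonal_singleton_iff_inner_left.1 y.2
    have hin : inner ℝ (t • θ.1 + (y : EuclideanSpace ℝ (Fin n))) θ.1 = t := by
      rw [inner_add_left, hy, inner_smul_left, real_inner_self_eq_norm_sq, hθ]; simp
    by_cases hyS : t • θ.1 + (y : EuclideanSpace ℝ (Fin n)) ∈ S
    · rw [Set.indicator_of_mem hyS, hin]
      exact Set.indicator_of_mem (s := {y : ((ℝ ∙ (θ : EuclideanSpace ℝ (Fin n)))ᗮ) |
        t • (θ : EuclideanSpace ℝ (Fin n)) + (y : EuclideanSpace ℝ (Fin n)) ∈ S}) hyS _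
    · rw [Set.indicator_of_notMem hyS]
      exact Set.indicator_of_notMem (s := {y : ((ℝ ∙ (θ : EuclideanSpace ℝ (Fin n)))ᗮ) |
        t • (θ : EuclideanSpace ℝ (Fin n)) + (y : EuclideanSpace ℝ (Fin n)) ∈ S}) hyS _
  simp only [step1]
  rw [sphMeasure, lintegral_smul_measure, lintegral_lintegral_swap (by fun_prop), smul_eq_mul,
    ← lintegral_const_mul _ (by fun_prop), ← lintegral_const_mul _ (by fun_prop)]
  refine lintegral_congr_ae ?_
  refine ae_restrict_of_ae ?_
  filter_upwards [Measure.ae_ne volume (0 : EuclideanSpace ℝ (Fin n))] with x hx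
  exact aux_sphere n hn μ hμ x hx
end
end

section
/- Let S ⊆ ℝ^n be a bounded Borel set. Then ∫_{S^{n-1}} ∫_ℝ ( V_{n-1}(S ∩ (θ^⊥ + tθ)) )^{n+1} dt d*θ ≤ ( b_{n-1}^{n+1} · b_{n²} / ( b_n^{n} · b_{n²−1} ) ) · ( V_n(S) )^{n}. (This is the case k = n−1 of Gardner's sharp affine inequality ∫_{A_{n,k}} [V_k(S ∩ τ)]^{n+1} dτ ≤ (b_k^{n+1} b_{n(k+1)} / (b_n^{k+1} b_{k(n+1)})) [V_n(S)]^{k+1} for bounded Borel sets.) -/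
open MeasureTheory Metric Real
open scoped ENNReal NNReal

noncomputable section

/-- `b_m = π^{m/2}/Γ(m/2+1)`, the volume of the m-dimensional unit ball. -/
def ballVol (m : ℕ) : ℝ := Real.pi ^ ((m : ℝ) / 2) / Real.Gamma ((m : ℝ) / 2 + 1)



lemma g_transport (A : Set ℝ) (hA : MeasurableSet A) (hfin : volume A ≠ ∞) :
    ∃ σ : ℝ → ℝ,
      AEMeasurable σ (volume.restrict (Set.Ioo (-((volume A).toReal / 2)) ((volume A).toReal / 2))) ∧
      Measure.map σ (volume.restrict (Set.Ioo (-((volume A).toReal / 2)) ((volume A).toReal / 2)))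
        = volume.restrict A ∧
      ∀ τ ∈ Set.Ioo (-((volume A).toReal / 2)) ((volume A).toReal / 2), 0 ≤ τ →
        2 * τ ≤ σ τ - σ (-τ) := by
  set ℓ := (volume A).toReal with hℓ
  set μ := volume.restrict A with hμ
  have : IsFiniteMeasure μ := ⟨by simpa [hμ] using hfin.lt_top⟩
  set T : ℝ → ℝ := fun s => (μ (Set.Iic s)).toReal with hT
  have hmu : (μ Set.univ).toReal = ℓ := by simp [hμ, hℓ]
  have hlip : ∀ s s', s ≤ s' → T s' ≤ T s + (s' - s) := by
    intro s s' h
    have h1 : μ (Set.Iic s') ≤ μ (Set.Iic s) + ENNReal.ofReal (s' - s) := by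
      rw [← Set.Iic_union_Ioc_eq_Iic h]
      refine (measure_union_le _ _).trans ?_
      gcongr
      refine (Measure.restrict_apply_le _ _).trans ?_
      simp
    have h2 := ENNReal.toReal_mono (by finiteness) h1
    rwa [ENNReal.toReal_add (by finiteness) (by finiteness),
      ENNReal.toReal_ofReal (by linarith)] at h2
  have hmono : Monotone T := fun s s' h =>
    ENNReal.toReal_mono (by finiteness) (measure_mono (Set.Iic_subset_Iic.2 h))
  have hcont : Continuous T := by
    have : LipschitzWith 1 T := LipschitzWith.of_le_add_mul 1 (fun x y => by
      rcases le_total x y with h | h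
      · have := hmono h
        simp; linarith [dist_nonneg (x := x) (y := y)]
      · have := hlip y x h
        simp [Real.dist_eq, abs_of_nonneg (sub_nonneg.2 h)]; linarith)
    exact this.continuous
  have htop : Filter.Tendsto T Filter.atTop (nhds ℓ) := by
    rw [← hmu]
    exact (ENNReal.tendsto_toReal (by finiteness)).comp (tendsto_measure_Iic_atTop μ)
  have hbot : Filter.Tendsto T Filter.atBot (nhds 0) := by
    have h0 := tendsto_measure_iInter_atBot (μ := μ) (s := fun x : ℝ => Set.Iic x)
      (fun i => measurableSet_Iic.nullMeasurableSet) (fun a b h => Set.Iic_subset_Iic.2 h)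
      ⟨0, by finiteness⟩
    have he : (⋂ n : ℝ, Set.Iic n) = (∅ : Set ℝ) := by
      ext x; simp only [Set.mem_iInter, Set.mem_Iic, Set.mem_empty_iff_false, iff_false, not_forall]
      exact ⟨x - 1, by linarith⟩
    rw [he, measure_empty] at h0
    exact (ENNReal.tendsto_toReal ENNReal.zero_ne_top).comp h0
  have hsurj : ∀ q ∈ Set.Ioo 0 ℓ, ∃ s, T s = q := by
    intro q hq
    exact mem_range_of_exists_le_of_exists_ge hcont
      ((hbot.eventually (gt_mem_nhds hq.1)).exists.imp fun _ h => h.le)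
      ((htop.eventually (lt_mem_nhds hq.2)).exists.imp fun _ h => h.le)
  choose! S hS using hsurj
  have hmem : ∀ τ ∈ Set.Ioo (-(ℓ / 2)) (ℓ / 2), τ + ℓ / 2 ∈ Set.Ioo 0 ℓ := by
    intro τ h; constructor <;> linarith [h.1, h.2]
  have hexp : ∀ q ∈ Set.Ioo 0 ℓ, ∀ q' ∈ Set.Ioo 0 ℓ, q ≤ q' → q' - q ≤ S q' - S q := by
    intro q hq q' hq' h
    rcases le_total (S q) (S q') with h1 | h1
    · have := hlip _ _ h1
      rw [hS q hq, hS q' hq'] at this; linarith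
    · have h2 := hmono h1
      rw [hS q hq, hS q' hq'] at h2
      have : q = q' := le_antisymm h h2
      subst this; simp
  have hmS : MonotoneOn (fun τ => S (τ + ℓ / 2)) (Set.Ioo (-(ℓ / 2)) (ℓ / 2)) := by
    intro a ha b hb hab
    have := hexp _ (hmem a ha) _ (hmem b hb) (by linarith)
    simp only; linarith
  have hae := aemeasurable_restrict_of_monotoneOn (μ := volume) measurableSet_Ioo hmS
  refine ⟨fun τ => S (τ + ℓ / 2), hae, ?_, ?_⟩
  · have : IsFiniteMeasure (Measure.map (fun τ => S (τ + ℓ / 2))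
      (volume.restrict (Set.Ioo (-(ℓ / 2)) (ℓ / 2)))) := by infer_instance
    refine Measure.ext_of_Iic _ _ fun x => ?_
    rw [Measure.map_apply_of_aemeasurable hae measurableSet_Iic, 
      Measure.restrict_apply₀ (hae.nullMeasurableSet_preimage measurableSet_Iic)]
    have hTx : μ (Set.Iic x) = ENNReal.ofReal (T x) := by
      rw [hT, ENNReal.ofReal_toReal (by finiteness)]
    have hTl : T x ≤ ℓ := by
      rw [← hmu]; exact ENNReal.toReal_mono (by finiteness) (measure_mono (Set.subset_univ _))
    rw [hTx]
    apply le_antisymm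
    · have : (fun τ => S (τ + ℓ / 2)) ⁻¹' Set.Iic x ∩ Set.Ioo (-(ℓ / 2)) (ℓ / 2) ⊆
          Set.Ioc (-(ℓ / 2)) (T x - ℓ / 2) := by
        rintro τ ⟨h1, h2⟩
        refine ⟨h2.1, ?_⟩
        have := hmono (show S (τ + ℓ / 2) ≤ x from h1)
        rw [hS _ (hmem τ h2)] at this
        linarith
      refine (measure_mono this).trans (le_of_eq ?_)
      rw [Real.volume_Ioc]; congr 1; ring
    · have : Set.Ioo (-(ℓ / 2)) (T x - ℓ / 2) ⊆ 
        (fun τ => S (τ + ℓ / 2)) ⁻¹' Set.Iic x ∩ Set.Ioo (-(ℓ / 2)) (ℓ / 2) := by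
        rintro τ ⟨h1, h2⟩
        have h3 : τ ∈ Set.Ioo (-(ℓ / 2)) (ℓ / 2) := ⟨h1, by linarith⟩
        refine ⟨?_, h3⟩
        show S (τ + ℓ / 2) ≤ x
        by_contra! hc
        have := hmono hc.le
        rw [hS _ (hmem τ h3)] at this
        linarith
      refine le_trans (le_of_eq ?_) (measure_mono this)
      rw [Real.volume_Ioo]; congr 1; ring
  · intro τ hτ h0
    have h1 : -τ ∈ Set.Ioo (-(ℓ / 2)) (ℓ / 2) := ⟨by linarith [hτ.2], by linarith [hτ.2]⟩
    have := hexp _ (hmem _ h1) _ (hmem τ hτ) (by linarith)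
    simp only; linarith

lemma g_neg_Ioo (r : ℝ) : (MeasurableEquiv.neg ℝ) ⁻¹' Set.Ioo (-r) r = Set.Ioo (-r) r := by
  ext x
  change -r < -x ∧ -x < r ↔ -r < x ∧ x < r
  constructor <;> rintro ⟨a, b⟩ <;> constructor <;> linarith

/-- reflecting one coordinate -/
lemma g_flip_step {ι : Type*} [Fintype ι] [DecidableEq ι] (ℓ : ι → ℝ) (φ : ι → ℝ → ℝ) (j : ι)
    (ψ : ℝ → ℝ) (hφ : φ j = fun τ => - φ j (-τ)) (hψ : ψ = fun τ => - ψ (-τ))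
    (hmφ : ∀ i, AEMeasurable (φ i) (volume.restrict (Set.Ioo (-ℓ i) (ℓ i))))
    (hle : ∀ τ ∈ Set.Ioo (-ℓ j) (ℓ j), |ψ τ| ≤ |φ j τ|) (hmψ : Measurable ψ) :
    ∫⁻ τ, ENNReal.ofReal |∑ i, Function.update φ j ψ i (τ i)|
        ∂(Measure.pi fun i => volume.restrict (Set.Ioo (-ℓ i) (ℓ i))) ≤
      ∫⁻ τ, ENNReal.ofReal |∑ i, φ i (τ i)|
        ∂(Measure.pi fun i => volume.restrict (Set.Ioo (-ℓ i) (ℓ i))) := by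
  set μ : ι → Measure ℝ := fun i => volume.restrict (Set.Ioo (-ℓ i) (ℓ i)) with hμ
  -- the flip
  let e : ι → (ℝ ≃ᵐ ℝ) := fun i => if i = j then MeasurableEquiv.neg ℝ else MeasurableEquiv.refl ℝ
  have he : ∀ i, MeasurePreserving (e i) (μ i) (μ i) := by
    intro i
    by_cases h : i = j
    · simp only [e, h, if_true, hμ]
      have h1 : MeasurePreserving (MeasurableEquiv.neg ℝ) (volume : Measure ℝ) volume :=
        Measure.measurePreserving_neg volume
      have := h1.restrict_preimage_emb (MeasurableEquiv.neg ℝ).measurableEmbedding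
        (Set.Ioo (-ℓ j) (ℓ j))
      rwa [g_neg_Ioo] at this
    · simp only [e, h, if_false]; exact MeasurePreserving.id _
  let E : (ι → ℝ) ≃ᵐ (ι → ℝ) := MeasurableEquiv.piCongrRight e
  have hE : MeasurePreserving E (Measure.pi μ) (Measure.pi μ) := measurePreserving_pi μ μ he
  have hEj : ∀ τ, E τ j = - τ j := by intro τ; simp [E, e, MeasurableEquiv.piCongrRight, MeasurableEquiv.neg]
  have hEi : ∀ τ i, i ≠ j → E τ i = τ i := by intro τ i h; simp [E, e, MeasurableEquiv.piCongrRight, h]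
  have key : ∀ (χ : ι → ℝ → ℝ), (∀ i, AEMeasurable (χ i) (μ i)) → 
      (2 : ℝ≥0∞) * ∫⁻ τ, ENNReal.ofReal |∑ i, χ i (τ i)| ∂(Measure.pi μ) =
      ∫⁻ τ, (ENNReal.ofReal |∑ i, χ i (τ i)| + ENNReal.ofReal |∑ i, χ i (E τ i)|) ∂(Measure.pi μ) := by
    intro χ hχ
    rw [lintegral_add_left']
    · rw [hE.lintegral_comp_emb E.measurableEmbedding (fun τ => ENNReal.ofReal |∑ i, χ i (τ i)|), two_mul]
    · refine AEMeasurable.ennreal_ofReal ?_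
      refine continuous_abs.measurable.comp_aemeasurable ?_
      refine Finset.aemeasurable_fun_sum _ fun i _ => ?_
      exact (hχ i).comp_quasiMeasurePreserving (Measure.quasiMeasurePreserving_eval _ i)
  have h2 : (2 : ℝ≥0∞) ≠ 0 := by norm_num
  have h2' : (2 : ℝ≥0∞) ≠ ∞ := by norm_num
  rw [← ENNReal.mul_le_mul_iff_right h2 h2', key φ hmφ, key]
  · refine lintegral_mono_ae ?_
    have hmem : ∀ᵐ τ ∂(Measure.pi μ), τ j ∈ Set.Ioo (-ℓ j) (ℓ j) := by
      have : ∀ᵐ t ∂(μ j), t ∈ Set.Ioo (-ℓ j) (ℓ j) := ae_restrict_mem measurableSet_Ioo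
      exact (Measure.quasiMeasurePreserving_eval μ j).ae this
    filter_upwards [hmem] with τ hτ
    rw [← ENNReal.ofReal_add (abs_nonneg _) (abs_nonneg _),
      ← ENNReal.ofReal_add (abs_nonneg _) (abs_nonneg _)]
    apply ENNReal.ofReal_le_ofReal
    have hs : ∀ (χ : ι → ℝ → ℝ) (σ : ι → ℝ), ∑ i, χ i (σ i) = χ j (σ j) + ∑ i ∈ Finset.univ.erase j, χ i (σ i) := by
      intro χ σ; exact (Finset.add_sum_erase _ (fun i => χ i (σ i)) (Finset.mem_univ j)).symm
    rw [hs, hs, hs, hs]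
    have e1 : ∑ i ∈ Finset.univ.erase j, Function.update φ j ψ i (τ i) = ∑ i ∈ Finset.univ.erase j, φ i (τ i) := by
      refine Finset.sum_congr rfl fun i hi => ?_
      rw [Function.update_of_ne (Finset.ne_of_mem_erase hi)]
    have e2 : ∑ i ∈ Finset.univ.erase j, Function.update φ j ψ i (E τ i) = ∑ i ∈ Finset.univ.erase j, φ i (τ i) := by
      refine Finset.sum_congr rfl fun i hi => ?_
      rw [Function.update_of_ne (Finset.ne_of_mem_erase hi), hEi _ _ (Finset.ne_of_mem_erase hi)]
    have e3 : ∑ i ∈ Finset.univ.erase j, φ i (E τ i) = ∑ i ∈ Finset.univ.erase j, φ i (τ i) := by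
      refine Finset.sum_congr rfl fun i hi => ?_
      rw [hEi _ _ (Finset.ne_of_mem_erase hi)]
    rw [e1, e2, e3, hEj, Function.update_self]
    have f1 : φ j (-τ j) = - φ j (τ j) := by have := congrFun hφ (-τ j); simpa using this
    have f2 : ψ (-τ j) = - ψ (τ j) := by have := congrFun hψ (-τ j); simpa using this
    rw [f1, f2]
    have := hle _ hτ
    generalize ∑ i ∈ Finset.univ.erase j, φ i (τ i) = r
    grind
  · intro i
    by_cases h : i = j
    · subst h; rw [Function.update_self]; exact hmψ.aemeasurable
    · rw [Function.update_of_ne h]; exact hmφ i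

lemma g_one_dim {ι : Type*} [Fintype ι] (a : ι → ℝ) (A : ι → Set ℝ)
    (hA : ∀ i, MeasurableSet (A i)) (hfin : ∀ i, volume (A i) ≠ ∞) :
    ∫⁻ s, ENNReal.ofReal |∑ i, a i * s i| ∂(Measure.pi fun i =>
        volume.restrict (Set.Ioo (-((volume (A i)).toReal / 2)) ((volume (A i)).toReal / 2))) ≤
    ∫⁻ s, ENNReal.ofReal |∑ i, a i * s i| ∂(Measure.pi fun i => volume.restrict (A i)) := by
  classical
  set ℓ : ι → ℝ := fun i => (volume (A i)).toReal / 2 with hℓ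
  choose σ hσm hσ hσe using fun i => g_transport (A i) (hA i) (hfin i)
  change ∀ i, AEMeasurable (σ i) (volume.restrict (Set.Ioo (-ℓ i) (ℓ i))) at hσm
  change ∀ i, Measure.map (σ i) (volume.restrict (Set.Ioo (-ℓ i) (ℓ i))) = _ at hσ
  change ∀ i, ∀ τ ∈ Set.Ioo (-ℓ i) (ℓ i), 0 ≤ τ → _ at hσe
  change ∫⁻ s, ENNReal.ofReal |∑ i, a i * s i| ∂(Measure.pi fun i =>
    volume.restrict (Set.Ioo (-ℓ i) (ℓ i))) ≤ _
  set μ : ι → Measure ℝ := fun i => volume.restrict (Set.Ioo (-ℓ i) (ℓ i)) with hμ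
  have hneg : ∀ i, MeasurePreserving (MeasurableEquiv.neg ℝ) (μ i) (μ i) := by
    intro i
    have h1 : MeasurePreserving (MeasurableEquiv.neg ℝ) (volume : Measure ℝ) volume :=
      Measure.measurePreserving_neg volume
    have := h1.restrict_preimage_emb (MeasurableEquiv.neg ℝ).measurableEmbedding
      (Set.Ioo (-ℓ i) (ℓ i))
    rwa [g_neg_Ioo] at this
  have hσm' : ∀ i, AEMeasurable (fun t => σ i (-t)) (μ i) := fun i =>
    (hσm i).comp_quasiMeasurePreserving (hneg i).quasiMeasurePreserving
  let D : ι → ℝ → ℝ := fun i t => a i * ((σ i t - σ i (-t)) / 2)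
  have hDm : ∀ i, AEMeasurable (D i) (μ i) := fun i =>
    (((hσm i).sub (hσm' i)).div_const 2).const_mul (a i)
  have hDle : ∀ i, ∀ t ∈ Set.Ioo (-ℓ i) (ℓ i), |a i * t| ≤ |D i t| := by
    intro i t ht
    simp only [D, abs_mul]
    refine mul_le_mul_of_nonneg_left ?_ (abs_nonneg _)
    rcases le_total 0 t with h | h
    · have := hσe i t ht h
      rw [abs_of_nonneg h, abs_of_nonneg] <;> linarith
    · have := hσe i (-t) ⟨by linarith [ht.2], by linarith [ht.1]⟩ (by linarith)
      rw [neg_neg] at this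
      rw [abs_of_nonpos h, abs_of_nonpos] <;> linarith
  -- step 1
  have step1 : ∫⁻ s, ENNReal.ofReal |∑ i, a i * s i| ∂(Measure.pi fun i => volume.restrict (A i))
      = ∫⁻ t, ENNReal.ofReal |∑ i, a i * σ i (t i)| ∂(Measure.pi μ) := by
    have hs : ∀ i, SigmaFinite (Measure.map (σ i) (μ i)) := fun i => by rw [hσ i]; infer_instance
    have h1 := Measure.pi_map_pi (μ := μ) (f := σ) hσm
    simp only [hσ, hμ] at h1
    rw [← h1, lintegral_map' (by
      apply Measurable.aemeasurable; fun_prop)]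
    exact aemeasurable_pi_lambda _ fun i =>
      (hσm i).comp_quasiMeasurePreserving (Measure.quasiMeasurePreserving_eval _ i)
  have hmS : AEMeasurable (fun t : ι → ℝ => ENNReal.ofReal |∑ i, a i * σ i (t i)|) (Measure.pi μ) := by
    refine AEMeasurable.ennreal_ofReal ?_
    refine continuous_abs.measurable.comp_aemeasurable ?_
    refine Finset.aemeasurable_fun_sum _ fun i _ => ?_
    exact ((hσm i).comp_quasiMeasurePreserving (Measure.quasiMeasurePreserving_eval _ i)).const_mul _
  have h2 : (2 : ℝ≥0∞) ≠ 0 := by norm_num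
  have h2' : (2 : ℝ≥0∞) ≠ ∞ := by norm_num
  have step2 : ∫⁻ t, ENNReal.ofReal |∑ i, D i (t i)| ∂(Measure.pi μ) ≤
      ∫⁻ t, ENNReal.ofReal |∑ i, a i * σ i (t i)| ∂(Measure.pi μ) := by
    rw [← ENNReal.mul_le_mul_iff_right h2 h2']
    have hE : MeasurePreserving (MeasurableEquiv.piCongrRight fun _ : ι => MeasurableEquiv.neg ℝ)
      (Measure.pi μ) (Measure.pi μ) := measurePreserving_pi μ μ hneg
    have e1 : (2 : ℝ≥0∞) * ∫⁻ t, ENNReal.ofReal |∑ i, a i * σ i (t i)| ∂(Measure.pi μ) =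
      ∫⁻ t, (ENNReal.ofReal |∑ i, a i * σ i (t i)| + ENNReal.ofReal |∑ i, a i * σ i (-t i)|)
        ∂(Measure.pi μ) := by
      rw [lintegral_add_left' hmS, two_mul]
      congr 1
      exact (hE.lintegral_comp_emb (MeasurableEquiv.measurableEmbedding _)
        (fun t => ENNReal.ofReal |∑ i, a i * σ i (t i)|)).symm
    rw [e1, ← lintegral_const_mul' _ _ h2']
    refine lintegral_mono fun t => ?_
    rw [← ENNReal.ofReal_add (abs_nonneg _) (abs_nonneg _),
      show (2 : ℝ≥0∞) = ENNReal.ofReal 2 by simp, ← ENNReal.ofReal_mul (by norm_num)]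
    apply ENNReal.ofReal_le_ofReal
    have : (2 : ℝ) * |∑ i, D i (t i)| = |∑ i, a i * σ i (t i) - ∑ i, a i * σ i (-t i)| := by
      rw [← Finset.sum_sub_distrib]
      nth_rewrite 1 [← abs_two]
      rw [← abs_mul, Finset.mul_sum]
      congr 1
      refine Finset.sum_congr rfl fun i _ => ?_
      simp only [D]; ring
    rw [this]
    exact abs_sub _ _
  -- step 3
  have step3 : ∀ F : Finset ι,
      ∫⁻ t, ENNReal.ofReal |∑ i, (if i ∈ F then (fun x => a i * x) else D i) (t i)| ∂(Measure.pi μ) ≤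
      ∫⁻ t, ENNReal.ofReal |∑ i, D i (t i)| ∂(Measure.pi μ) := by
    intro F
    induction F using Finset.induction_on with
    | empty => simp
    | insert j F hj ih =>
      refine le_trans ?_ ih
      have := g_flip_step ℓ (fun i => if i ∈ F then (fun x => a i * x) else D i) j
        (fun x => a j * x) ?_ ?_ ?_ ?_ ?_
      · refine le_trans (le_of_eq ?_) this
        refine lintegral_congr fun t => ?_
        congr 2
        refine Finset.sum_congr rfl fun i _ => ?_
        by_cases h : i = j
        · subst h; simp
        · simp [Function.update_of_ne h, h]
      · simp only [hj, if_false]; ext t; simp only [D, neg_neg]; ring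
      · ext t; ring
      · intro i
        by_cases h : i ∈ F
        · simp only [h, if_true]; fun_prop
        · simp only [h, if_false]; exact hDm i
      · intro t ht
        simp only [hj, if_false]; exact hDle j t ht
      · fun_prop
  rw [step1]
  refine le_trans ?_ step2
  refine le_trans (le_of_eq ?_) (step3 Finset.univ)
  simp


abbrev EE (k : ℕ) := EuclideanSpace ℝ (Fin k)

def gcns (k : ℕ) : (ℝ × EE k) ≃ᵐ EE (k + 1) :=
  ((MeasurableEquiv.refl ℝ).prodCongr (MeasurableEquiv.toLp 2 (Fin k → ℝ)).symm).trans
    ((MeasurableEquiv.piFinSuccAbove (fun _ : Fin (k + 1) => ℝ) 0).symm.trans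
      (MeasurableEquiv.toLp 2 (Fin (k + 1) → ℝ)))

lemma gcns_zero (k : ℕ) (p : ℝ × EE k) : gcns k p 0 = p.1 := by
  simp [gcns, MeasurableEquiv.piFinSuccAbove]
  rfl

lemma gcns_succ (k : ℕ) (p : ℝ × EE k) (j : Fin k) : gcns k p j.succ = p.2 j := by
  simp [gcns, MeasurableEquiv.piFinSuccAbove]
  rfl

lemma gcns_mp (k : ℕ) : MeasurePreserving (gcns k) volume volume := by
  have h1 : MeasurePreserving (MeasurableEquiv.toLp 2 (Fin k → ℝ)).symm volume volume :=
    (PiLp.volume_preserving_toLp (Fin k)).symm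
  have h2 := (volume_preserving_piFinSuccAbove (fun _ : Fin (k + 1) => ℝ) 0).symm
  have h3 : MeasurePreserving (MeasurableEquiv.toLp 2 (Fin (k + 1) → ℝ)) volume volume :=
    (PiLp.volume_preserving_toLp (Fin (k + 1)))
  exact h3.comp (h2.comp ((MeasurePreserving.id volume).prod h1))

lemma gcns_inner (k : ℕ) (p q : ℝ × EE k) :
    inner ℝ (gcns k p) (gcns k q) = p.1 * q.1 + inner ℝ p.2 q.2 := by
  simp [PiLp.inner_apply, Fin.sum_univ_succ, gcns_zero, gcns_succ, mul_comm]

lemma gcns_norm_sq (k : ℕ) (p : ℝ × EE k) : ‖gcns k p‖ ^ 2 = p.1 ^ 2 + ‖p.2‖ ^ 2 := by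
  rw [← real_inner_self_eq_norm_sq, gcns_inner, real_inner_self_eq_norm_sq]; ring

lemma gcns_smul (k : ℕ) (c : ℝ) (p : ℝ × EE k) : gcns k (c • p) = c • gcns k p := by
  ext i; refine Fin.cases ?_ (fun j => ?_) i <;> simp [gcns_zero, gcns_succ]

lemma gcns_add (k : ℕ) (p q : ℝ × EE k) : gcns k (p + q) = gcns k p + gcns k q := by
  ext i; refine Fin.cases ?_ (fun j => ?_) i <;> simp [gcns_zero, gcns_succ]

def ddet {n : ℕ} (x : Fin n → EE n) : ℝ := Matrix.det (Matrix.of fun i j => x i j)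

def gdet {m : ℕ} (y : Fin (m + 1) → EE m) : ℝ := ddet fun i => gcns m (1, y i)

lemma ddet_gram {n : ℕ} (x x' : Fin n → EE n) (h : ∀ i j, inner ℝ (x i) (x j) = inner ℝ (x' i) (x' j)) :
    |ddet x| = |ddet x'| := by
  have key : ∀ x : Fin n → EE n, ddet x ^ 2 = Matrix.det (Matrix.of fun i j => inner ℝ (x i) (x j)) := by
    intro x
    have : (Matrix.of fun i j => inner ℝ (x i) (x j)) =
        (Matrix.of fun i j => x i j) * (Matrix.of fun i j => x i j).transpose := by
      ext i j
      simp [Matrix.mul_apply, PiLp.inner_apply, mul_comm]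
    rw [this, Matrix.det_mul, Matrix.det_transpose, ddet, sq]
  rw [← sq_eq_sq_iff_abs_eq_abs, key, key]
  simp only [h]

lemma ddet_isom {n : ℕ} (ρ : EE n ≃ₗᵢ[ℝ] EE n) (x : Fin n → EE n) :
    |ddet fun i => ρ (x i)| = |ddet x| := ddet_gram _ _ fun i j => by simp

lemma gdet_isom {n : ℕ} (ρ : EE n ≃ₗᵢ[ℝ] EE n) (x : Fin (n + 1) → EE n) :
    |gdet fun i => ρ (x i)| = |gdet x| := ddet_gram _ _ fun i j => by simp [gcns_inner]

lemma ddet_smul {n : ℕ} (c : Fin n → ℝ) (x : Fin n → EE n) :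
    ddet (fun i => c i • x i) = (∏ i, c i) * ddet x := by
  rw [ddet, ddet, ← Matrix.det_mul_column]; simp

lemma ddet_gcns {m : ℕ} (t : ℝ) (y : Fin (m + 1) → EE m) :
    ddet (fun i => gcns m (t, y i)) = t * gdet y := by
  have := Matrix.det_mul_row (Fin.cons t (fun _ => 1) : Fin (m + 1) → ℝ) 
    (Matrix.of fun i j => gcns m (1, y i) j)
  rw [Fin.prod_univ_succ] at this
  simp only [Fin.cons_zero, Fin.cons_succ, Finset.prod_const_one, mul_one] at this
  rw [gdet, ddet, ddet, ← this]
  congr 1; ext i j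
  refine Fin.cases ?_ (fun j => ?_) j <;> simp [gcns_zero, gcns_succ]

lemma gdet_smul {m : ℕ} (c : ℝ) (y : Fin (m + 1) → EE m) :
    gdet (fun i => c • y i) = c ^ m * gdet y := by
  have := Matrix.det_mul_row (Fin.cons 1 (fun _ => c) : Fin (m + 1) → ℝ) 
    (Matrix.of fun i j => gcns m (1, y i) j)
  rw [Fin.prod_univ_succ] at this
  simp only [Fin.cons_zero, Fin.cons_succ, Finset.prod_const, Finset.card_univ, Fintype.card_fin, one_mul] at this
  rw [gdet, gdet, ddet, ddet, ← this]
  congr 1; ext i j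
  refine Fin.cases ?_ (fun j => ?_) j <;> simp [gcns_zero, gcns_succ]

lemma continuous_gcns (k : ℕ) : Continuous (gcns k) := by
  refine (PiLp.continuous_toLp 2 _).comp ?_ |>.congr (f := fun p => WithLp.toLp 2 (fun i => gcns k p i)) (fun p => rfl)
  refine continuous_pi fun i => ?_
  refine Fin.cases ?_ (fun j => ?_) i
  · simp only [gcns_zero]; fun_prop
  · simp only [gcns_succ]; fun_prop

lemma continuous_ddet {n : ℕ} : Continuous (ddet (n := n)) := by
  unfold ddet
  refine Continuous.matrix_det ?_
  refine continuous_matrix fun i j => ?_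
  simp only [Matrix.of_apply]; fun_prop

lemma continuous_gdet {m : ℕ} : Continuous (gdet (m := m)) := by
  unfold gdet
  refine continuous_ddet.comp (continuous_pi fun i => ?_)
  exact (continuous_gcns m).comp (by fun_prop)

lemma gdet_linear (k : ℕ) : ∃ a : (Fin (k + 2) → EE k) → Fin (k + 2) → ℝ, ∀ (s : Fin (k + 2) → ℝ) y,
    gdet (m := k + 1) (fun i => gcns k (s i, y i)) = ∑ i, a y i * s i := by
  refine ⟨fun y i => (-1) ^ (i + 1 : ℕ) * Matrix.det (Matrix.submatrix (Matrix.of fun i j =>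
    gcns (k + 1) (1, gcns k (0, y i)) j) i.succAbove (Fin.succAbove 1)), fun s y => ?_⟩
  rw [gdet, ddet, Matrix.det_succ_column _ 1]
  refine Finset.sum_congr rfl fun i _ => ?_
  have h1 : gcns (k + 1) (1, gcns k (s i, y i)) 1 = s i := by
    rw [show (1 : Fin (k + 1 + 1)) = Fin.succ 0 from rfl, gcns_succ]; simp [gcns_zero]
  simp only [Matrix.of_apply, h1]
  have h2 : (Matrix.of fun i j => gcns (k + 1) (1, gcns k (s i, y i)) j).submatrix i.succAbove (Fin.succAbove 1) = 
     (Matrix.of fun i j => gcns (k + 1) (1, gcns k (0, y i)) j).submatrix i.succAbove (Fin.succAbove 1) := by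
    ext a b
    simp only [Matrix.submatrix_apply, Matrix.of_apply]
    refine Fin.cases ?_ (fun c => ?_) b
    · rw [show Fin.succAbove (1 : Fin (k + 2)) 0 = 0 by simp]; simp [gcns_zero]
    · rw [show Fin.succAbove (1 : Fin (k + 2)) c.succ = c.succ.succ from
        Fin.succAbove_of_lt_succ _ _ (by simp [Fin.lt_def])]
      simp [gcns_succ]
  rw [h2]
  simp; ring

lemma g_exists_basis {k : ℕ} (u : EE (k + 1)) (hu : ‖u‖ = 1) :
    ∃ b : OrthonormalBasis (Fin (k + 1)) ℝ (EE (k + 1)), b 0 = u := by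
  obtain ⟨b, hb⟩ := Orthonormal.exists_orthonormalBasis_extension_of_card_eq (𝕜 := ℝ) (E := EE (k + 1))
    (ι := Fin (k + 1)) (by simp) (v := fun _ => u) (s := {0}) (by
      constructor
      · intro i; simpa using hu
      · intro i j hij; exact absurd (Subsingleton.elim i j) hij)
  exact ⟨b, hb 0 rfl⟩

lemma g_repr {k : ℕ} (b : OrthonormalBasis (Fin (k + 1)) ℝ (EE (k + 1))) :
    b.repr (b 0) = gcns k (1, 0) := by
  ext i
  refine Fin.cases ?_ (fun j => ?_) i <;> simp [gcns_zero, gcns_succ]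


def gF {m : ℕ} (K : Set (EE m)) : ℝ≥0∞ :=
  ∫⁻ x : Fin (m + 1) → EE m, ENNReal.ofReal |gdet x| ∂(Measure.pi fun _ => volume.restrict K)

lemma measurable_gdet {m : ℕ} : Measurable fun x : Fin (m + 1) → EE m => ENNReal.ofReal |gdet x| :=
  (ENNReal.continuous_ofReal.comp (continuous_gdet.abs)).measurable

lemma gF_eq {m : ℕ} (K : Set (EE m)) :
    gF K = ∫⁻ x in Set.univ.pi (fun _ : Fin (m + 1) => K), ENNReal.ofReal |gdet x| := by
  rw [gF, volume_pi, Measure.restrict_pi_pi]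

lemma gF_isom {m : ℕ} (ρ : EE m ≃ₗᵢ[ℝ] EE m) (K : Set (EE m)) (hK : MeasurableSet K) :
    gF (ρ ⁻¹' K) = gF K := by
  have h1 : MeasurePreserving (fun (x : Fin (m + 1) → EE m) i => ρ (x i))
      (Measure.pi fun _ => volume.restrict (ρ ⁻¹' K)) (Measure.pi fun _ => volume.restrict K) :=
    measurePreserving_pi (ι := Fin (m + 1)) (fun _ => volume.restrict (ρ ⁻¹' K)) (fun _ => volume.restrict K)
      (f := fun _ => ρ) fun i => ρ.measurePreserving.restrict_preimage hK
  rw [gF, gF, ← h1.lintegral_comp measurable_gdet]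
  simp only [gdet_isom]

def gcnsPi (k : ℕ) : ((Fin (k + 2) → ℝ) × (Fin (k + 2) → EE k)) ≃ᵐ (Fin (k + 2) → EE (k + 1)) :=
  (MeasurableEquiv.arrowProdEquivProdArrow ℝ (EE k) (Fin (k + 2))).symm.trans
    (MeasurableEquiv.piCongrRight fun _ => gcns k)

lemma gcnsPi_apply (k : ℕ) (p) (i) : gcnsPi k p i = gcns k (p.1 i, p.2 i) := rfl

lemma gcnsPi_mp (k : ℕ) : MeasurePreserving (gcnsPi k) volume volume := by
  have h1 := (volume_measurePreserving_arrowProdEquivProdArrow ℝ (EE k) (Fin (k + 2))).symm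
  have h2 := volume_preserving_pi (ι := Fin (k + 2)) (f := fun _ => gcns k) fun _ => gcns_mp k
  exact h2.comp h1

def gsec {k : ℕ} (K : Set (EE (k + 1))) (y : EE k) : Set ℝ := {s | gcns k (s, y) ∈ K}

lemma gsec_meas {k : ℕ} {K : Set (EE (k + 1))} (hK : MeasurableSet K) (y : EE k) :
    MeasurableSet (gsec K y) :=
  ((gcns k).measurable.comp measurable_prodMk_right) hK

lemma gF_fub {k : ℕ} (K : Set (EE (k + 1))) (hK : MeasurableSet K) :
    gF K = ∫⁻ y : Fin (k + 2) → EE k, ∫⁻ s : Fin (k + 2) → ℝ,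
      ENNReal.ofReal |gdet (m := k + 1) fun i => gcns k (s i, y i)|
        ∂(Measure.pi fun i => volume.restrict (gsec K (y i))) := by
  have hm : MeasurableSet (Set.univ.pi (fun _ : Fin (k + 2) => K)) :=
    MeasurableSet.univ_pi fun _ => hK
  have hf := (measurable_gdet (m := k + 1)).indicator hm
  rw [gF_eq, ← lintegral_indicator hm, ← (gcnsPi_mp k).lintegral_comp hf, Measure.volume_eq_prod]
  refine (lintegral_prod_symm' _ (hf.comp (gcnsPi k).measurable)).trans ?_
  refine lintegral_congr fun y => ?_
  rw [← Measure.restrict_pi_pi, ← lintegral_indicator (MeasurableSet.univ_pi fun i => gsec_meas hK _), ← volume_pi]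
  refine lintegral_congr fun s => ?_
  simp only [Set.indicator, Set.mem_univ_pi, gcnsPi_apply, gsec, Set.mem_ofPred_eq]
  rfl

lemma vol_fub {k : ℕ} (T : Set (EE (k + 1))) (hT : MeasurableSet T) :
    volume T = ∫⁻ y : EE k, volume (gsec T y) := by
  rw [← (gcns_mp k).measure_preimage hT.nullMeasurableSet, Measure.volume_eq_prod,
    Measure.prod_apply_symm ((gcns k).measurable hT)]
  rfl

lemma gsec_vol_meas {k : ℕ} {K : Set (EE (k + 1))} (hK : MeasurableSet K) :
    Measurable fun y : EE k => volume (gsec K y) :=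
  measurable_measure_prodMk_right ((gcns k).measurable hK)

/-- Steiner symmetral -/
def gSt {k : ℕ} (K : Set (EE (k + 1))) : Set (EE (k + 1)) :=
  (gcns k).symm ⁻¹' {p : ℝ × EE k | 2 * |p.1| < (volume (gsec K p.2)).toReal}

lemma gSt_meas {k : ℕ} {K : Set (EE (k + 1))} (hK : MeasurableSet K) : MeasurableSet (gSt K) := by
  refine (gcns k).symm.measurable (measurableSet_lt ?_ ?_)
  · fun_prop
  · exact ((gsec_vol_meas hK).comp measurable_snd).ennreal_toReal

lemma gSt_sec {k : ℕ} (K : Set (EE (k + 1))) (y : EE k) :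
    gsec (gSt K) y = Set.Ioo (-((volume (gsec K y)).toReal / 2)) ((volume (gsec K y)).toReal / 2) := by
  ext s
  simp only [gsec, gSt, Set.mem_ofPred_eq, Set.mem_preimage, MeasurableEquiv.symm_apply_apply, Set.mem_Ioo]
  rw [← abs_lt]
  constructor <;> intro h <;> linarith

lemma gsec_ball {k : ℕ} (r : ℝ) (hr : 0 < r) (y : EE k) :
    gsec (ball (0 : EE (k + 1)) r) y = Set.Ioo (-√(r ^ 2 - ‖y‖ ^ 2)) (√(r ^ 2 - ‖y‖ ^ 2)) := by
  ext s
  simp only [gsec, Set.mem_ofPred_eq, mem_ball_zero_iff, Set.mem_Ioo]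
  rw [← abs_lt, Real.lt_sqrt (abs_nonneg s), sq_abs, ← sq_lt_sq₀ (norm_nonneg _) hr.le, gcns_norm_sq]
  constructor <;> intro h <;> simp only at * <;> linarith

lemma gSt_ball {k : ℕ} {K : Set (EE (k + 1))} {R : ℝ} (hR : 0 < R) (h : K ⊆ ball 0 R) :
    gSt K ⊆ ball 0 R := by
  intro x hx
  obtain ⟨⟨s, y⟩, rfl⟩ := (gcns k).surjective x
  have h1 : s ∈ gsec (gSt K) y := hx
  change s ∈ gsec (ball 0 R) y
  have h2 : volume (gsec K y) ≤ volume (gsec (ball 0 R) y) := measure_mono fun s hs => h hs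
  rw [gSt_sec] at h1
  rw [gsec_ball R hR] at h2 ⊢
  rw [Real.volume_Ioo] at h2
  have h3 : (volume (gsec K y)).toReal ≤ 2 * √(R ^ 2 - ‖y‖ ^ 2) := by
    refine ENNReal.toReal_le_of_le_ofReal (by positivity) (h2.trans_eq ?_)
    congr 1; ring
  exact ⟨by linarith [h1.1], by linarith [h1.2]⟩

lemma gsec_fin {k : ℕ} {K : Set (EE (k + 1))} {R : ℝ} (hR : 0 < R) (h : K ⊆ ball 0 R) (y : EE k) :
    volume (gsec K y) ≠ ∞ := by
  have h2 : volume (gsec K y) ≤ volume (gsec (ball 0 R) y) := measure_mono fun s hs => h hs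
  rw [gsec_ball R hR, Real.volume_Ioo] at h2
  exact ne_top_of_le_ne_top ENNReal.ofReal_ne_top h2

lemma gSt_secvol {k : ℕ} {K : Set (EE (k + 1))} {R : ℝ} (hR : 0 < R) (h : K ⊆ ball 0 R) (y : EE k) :
    volume (gsec (gSt K) y) = volume (gsec K y) := by
  rw [gSt_sec, Real.volume_Ioo]
  ring_nf
  exact ENNReal.ofReal_toReal (gsec_fin hR h y)

lemma gSt_vol {k : ℕ} {K : Set (EE (k + 1))} (hK : MeasurableSet K) {R : ℝ} (hR : 0 < R) (h : K ⊆ ball 0 R) :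
    volume (gSt K) = volume K := by
  rw [vol_fub _ (gSt_meas hK), vol_fub _ hK]
  exact lintegral_congr fun y => gSt_secvol hR h y

lemma gSt_gF {k : ℕ} {K : Set (EE (k + 1))} (hK : MeasurableSet K) {R : ℝ} (hR : 0 < R) (h : K ⊆ ball 0 R) :
    gF (gSt K) ≤ gF K := by
  rw [gF_fub _ (gSt_meas hK), gF_fub _ hK]
  refine lintegral_mono fun y => ?_
  obtain ⟨a, ha⟩ := gdet_linear k
  simp only [ha, gSt_sec]
  exact g_one_dim (a y) (fun i => gsec K (y i)) (fun i => gsec_meas hK _) fun i => gsec_fin hR h _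

lemma gSt_gain {k : ℕ} {K : Set (EE (k + 1))} (hK : MeasurableSet K) {R r : ℝ} (hR : 0 < R) (hr : 0 < r)
    (h : K ⊆ ball 0 R) (τ : ℝ) :
    volume (ball 0 r \ gSt K) + volume {x | x ∈ K \ ball 0 r ∧ x + gcns k (τ, 0) ∈ ball 0 r \ K} ≤
      volume (ball 0 r \ K) := by
  have hB : MeasurableSet (ball (0 : EE (k + 1)) r) := measurableSet_ball
  have hD : MeasurableSet {x | x ∈ K \ ball 0 r ∧ x + gcns k (τ, 0) ∈ ball 0 r \ K} :=
    (hK.diff hB).inter ((measurable_add_const _) (hB.diff hK))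
  have hBS := hB.diff (gSt_meas hK)
  rw [vol_fub _ hBS, vol_fub _ hD, vol_fub _ (hB.diff hK), ← lintegral_add_left (gsec_vol_meas hBS)]
  refine lintegral_mono fun y => ?_
  set B := gsec (ball (0 : EE (k + 1)) r) y with hBdef
  set A := gsec K y with hA
  have hBm : MeasurableSet B := gsec_meas hB y
  have hAm : MeasurableSet A := gsec_meas hK y
  have e1 : gsec (ball 0 r \ gSt K) y = B \ gsec (gSt K) y := rfl
  have e2 : gsec (ball 0 r \ K) y = B \ A := rfl
  have e3 : gsec {x | x ∈ K \ ball 0 r ∧ x + gcns k (τ, 0) ∈ ball 0 r \ K} y =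
      {s | s ∈ A \ B ∧ s + τ ∈ B \ A} := by
    ext s
    have : gcns k (s, y) + gcns k (τ, 0) = gcns k (s + τ, y) := by rw [← gcns_add]; simp
    simp only [gsec, Set.mem_ofPred_eq, this]
    rfl
  rw [e1, e2, e3]
  have hAf : volume A ≠ ∞ := gsec_fin hR h y
  have hBf : volume B ≠ ∞ := gsec_fin hr subset_rfl y
  have f1 : volume {s | s ∈ A \ B ∧ s + τ ∈ B \ A} ≤ volume (A \ B) := measure_mono fun s hs => hs.1
  have f2 : volume {s | s ∈ A \ B ∧ s + τ ∈ B \ A} ≤ volume (B \ A) := by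
    rw [← measure_preimage_add_right volume τ (B \ A)]
    exact measure_mono fun s hs => hs.2
  have f3 : volume (B \ gsec (gSt K) y) ≤ volume B - volume A := by
    rw [hA, ← gSt_secvol hR h y]
    have hSm := gsec_meas (gSt_meas hK) y
    rw [gSt_sec] at hSm ⊢
    rw [hBdef, gsec_ball r hr]
    rcases le_total ((volume (gsec K y)).toReal / 2) (√(r ^ 2 - ‖y‖ ^ 2)) with hle | hle
    · rw [measure_sdiff (Set.Ioo_subset_Ioo (by linarith) hle) hSm.nullMeasurableSet (by simp)]
    · rw [Set.sdiff_eq_empty.2 (Set.Ioo_subset_Ioo (by linarith) hle)]; simp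
  have g1 : volume B = volume (B ∩ A) + volume (B \ A) := (measure_inter_add_sdiff B hAm).symm
  have g2 : volume A = volume (B ∩ A) + volume (A \ B) := by
    rw [Set.inter_comm]; exact (measure_inter_add_sdiff A hBm).symm
  have gf : volume (B ∩ A) ≠ ∞ := ne_top_of_le_ne_top hBf (measure_mono Set.inter_subset_left)
  rw [g1, g2, ENNReal.add_sub_add_eq_sub_left gf] at f3
  rcases le_total (volume (A \ B)) (volume (B \ A)) with hle | hle
  · calc _ ≤ (volume (B \ A) - volume (A \ B)) + volume (A \ B) := add_le_add f3 f1
      _ = _ := tsub_add_cancel_of_le hle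
  · rw [tsub_eq_zero_of_le hle] at f3
    simpa using add_le_add f3 f2

lemma g_improve {k : ℕ} {K : Set (EE (k + 1))} (hK : MeasurableSet K) {R r : ℝ} (hR : 0 < R) (hr : 0 < r)
    (h : K ⊆ ball 0 R) (z : EE (k + 1)) (hz : z ≠ 0) :
    ∃ K' : Set (EE (k + 1)), MeasurableSet K' ∧ K' ⊆ ball 0 R ∧ volume K' = volume K ∧ gF K' ≤ gF K ∧
     volume (ball 0 r \ K') + volume {x | x ∈ K \ ball 0 r ∧ x + z ∈ ball 0 r \ K} ≤
      volume (ball 0 r \ K) := by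
  obtain ⟨b, hb⟩ := g_exists_basis (‖z‖⁻¹ • z) (by rw [norm_smul]; simp [hz])
  set ρ := b.repr with hρ
  have hz' : z = ρ.symm (gcns k (‖z‖, 0)) := by
    rw [LinearIsometryEquiv.eq_symm_apply, show ((‖z‖, 0) : ℝ × EE k) = ‖z‖ • (1, 0) by simp, gcns_smul, ← g_repr b, hb, 
      hρ, ← map_smul, smul_smul, mul_inv_cancel₀ (by simpa using hz), one_smul]
  set K1 := ρ.symm ⁻¹' K with hK1
  have hK1m : MeasurableSet K1 := ρ.symm.continuous.measurable hK
  have hK1b : K1 ⊆ ball 0 R := fun x hx => by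
    have := h hx
    simpa using this
  have hbl : ∀ r, ρ ⁻¹' (ball 0 r) = ball 0 r := fun r => by ext; simp
  have hKK : K = ρ ⁻¹' K1 := by ext; simp [hK1]
  have hv : ∀ T : Set (EE (k + 1)), MeasurableSet T → volume (ρ ⁻¹' T) = volume T := fun T hT =>
    ρ.measurePreserving.measure_preimage hT.nullMeasurableSet
  have hS := gSt_meas hK1m
  have hB : MeasurableSet (ball (0 : EE (k + 1)) r) := measurableSet_ball
  refine ⟨ρ ⁻¹' (gSt K1), ρ.continuous.measurable hS, ?_, ?_, ?_, ?_⟩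
  · rw [← hbl]; exact Set.preimage_mono (gSt_ball hR hK1b)
  · rw [hv _ hS, gSt_vol hK1m hR hK1b, ← hv _ hK1m, ← hKK]
  · rw [gF_isom _ _ hS]
    refine (gSt_gF hK1m hR hK1b).trans_eq ?_
    rw [← gF_isom ρ _ hK1m, ← hKK]
  · have := gSt_gain hK1m hR hr hK1b ‖z‖
    have hD : MeasurableSet {x | x ∈ K1 \ ball 0 r ∧ x + gcns k (‖z‖, 0) ∈ ball 0 r \ K1} :=
      (hK1m.diff hB).inter ((measurable_add_const _) (hB.diff hK1m))
    rw [← hv _ (hB.diff hS), ← hv _ hD, ← hv _ (hB.diff hK1m), Set.preimage_sdiff, Set.preimage_sdiff, hbl, ← hKK] at this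
    convert this using 3
    ext x
    have e : ∀ w, w ∈ K ↔ ρ w ∈ K1 := fun w => by simp [hK1]
    have e2 : ρ (x + z) = ρ x + gcns k (‖z‖, 0) := by
      conv_lhs => rw [hz']
      simp
    have e3 : ‖x + z‖ = ‖ρ x + gcns k (‖z‖, 0)‖ := by rw [← e2, ρ.norm_map]
    simp only [Set.mem_ofPred_eq, Set.mem_preimage, Set.mem_sdiff, mem_ball_zero_iff, e, e2, e3, ρ.norm_map]


lemma g_exists_z {k : ℕ} {A C : Set (EE (k + 1))} (hA : MeasurableSet A) (hC : MeasurableSet C) {R : ℝ} (hR : 0 < R)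
    (hAR : A ⊆ ball 0 R) (hCR : C ⊆ ball 0 R) (hd : Disjoint A C) (hv : volume A = volume C) (h0 : volume C ≠ 0) :
    ∃ z : EE (k + 1), z ≠ 0 ∧
      volume C ^ 2 / (2 * volume (ball (0 : EE (k + 1)) (2 * R))) ≤ volume {x | x ∈ A ∧ x + z ∈ C} := by
  set v := volume (ball (0 : EE (k + 1)) (2 * R)) with hvdef
  have hv0 : v ≠ 0 := (measure_ball_pos _ _ (by linarith)).ne'
  have hvt : v ≠ ∞ := measure_ball_lt_top.ne
  have hCt : volume C ≠ ∞ := ne_top_of_le_ne_top measure_ball_lt_top.ne (measure_mono hCR)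
  have hq0 : volume C ^ 2 / (2 * v) ≠ 0 := (ENNReal.div_pos (pow_ne_zero _ h0) (by finiteness)).ne'
  by_contra! hcon
  let T : Set (EE (k + 1) × EE (k + 1)) := {p | p.1 ∈ A ∧ p.1 + p.2 ∈ C}
  have hT : MeasurableSet T := (measurable_fst hA).inter ((measurable_fst.add measurable_snd) hC)
  have h1 : (volume.prod volume) T = volume A * volume C := by
    rw [Measure.prod_apply hT]
    have : ∀ x, volume (Prod.mk x ⁻¹' T) = A.indicator (fun _ => volume C) x := by
      intro x
      by_cases hx : x ∈ A
      · rw [Set.indicator_of_mem hx, ← measure_preimage_add volume x C]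
        congr 1; ext z; simp [T, hx]
      · rw [Set.indicator_of_notMem hx]
        have : Prod.mk x ⁻¹' T = ∅ := by ext z; simp [T, hx]
        rw [this]; simp
    simp only [this]
    rw [lintegral_indicator hA, setLIntegral_const, mul_comm]
  rw [Measure.prod_apply_symm hT] at h1
  have h2 : ∀ z, volume ((fun x => (x, z)) ⁻¹' T) ≤
      (ball (0 : EE (k + 1)) (2 * R)).indicator (fun _ => volume C ^ 2 / (2 * v)) z := by
    intro z
    by_cases hz : z ∈ ball (0 : EE (k + 1)) (2 * R)
    · rw [Set.indicator_of_mem hz]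
      by_cases hz0 : z = 0
      · have : (fun x => (x, z)) ⁻¹' T = ∅ := by
          ext x; simp only [T, hz0, Set.mem_preimage, Set.mem_ofPred_eq, add_zero, Set.mem_empty_iff_false, iff_false]
          exact fun hx => Set.disjoint_left.1 hd hx.1 hx.2
        rw [this]; simp
      · exact (hcon z hz0).le
    · have : (fun x => (x, z)) ⁻¹' T = ∅ := by
        ext x; simp only [T, Set.mem_preimage, Set.mem_ofPred_eq, Set.mem_empty_iff_false, iff_false]
        rintro ⟨hx, hxz⟩
        have a1 := hAR hx
        have a2 := hCR hxz
        rw [mem_ball_zero_iff] at a1 a2 hz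
        apply hz
        calc ‖z‖ = ‖(x + z) - x‖ := by simp
          _ ≤ ‖x + z‖ + ‖x‖ := norm_sub_le _ _
          _ < 2 * R := by linarith
      rw [this]; simp
  have h3 := lintegral_mono (μ := volume) h2
  rw [h1, lintegral_indicator measurableSet_ball, setLIntegral_const, hv, ← hvdef] at h3
  have h4 : volume C ^ 2 / (2 * v) * v = volume C ^ 2 / 2 := by
    rw [ENNReal.div_eq_inv_mul, ENNReal.mul_inv (by simp) (by simp), div_eq_mul_inv]
    calc _ = volume C ^ 2 * 2⁻¹ * (v⁻¹ * v) := by ring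
      _ = _ := by rw [ENNReal.inv_mul_cancel hv0 hvt, mul_one]
  rw [h4, ← sq] at h3
  exact absurd h3 (not_le.2 (ENNReal.half_lt_self (pow_ne_zero _ h0) (by finiteness)))

lemma g_sdiff_eq {α} [MeasurableSpace α] {μ : Measure α} {A B : Set α} (hA : MeasurableSet A) (hB : MeasurableSet B)
    (h : μ A = μ B) (hf : μ B ≠ ∞) : μ (A \ B) = μ (B \ A) := by
  have g1 : μ B = μ (B ∩ A) + μ (B \ A) := (measure_inter_add_sdiff B hA).symm
  have g2 : μ A = μ (B ∩ A) + μ (A \ B) := by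
    rw [Set.inter_comm]; exact (measure_inter_add_sdiff A hB).symm
  have gf : μ (B ∩ A) ≠ ∞ := ne_top_of_le_ne_top hf (measure_mono Set.inter_subset_left)
  rw [g1, g2] at h
  exact (ENNReal.add_right_inj gf).1 h

lemma g_approx {k : ℕ} {K : Set (EE (k + 1))} (hK : MeasurableSet K) {R r : ℝ} (hr : 0 < r) (hrR : r ≤ R)
    (h : K ⊆ ball 0 R) (hv : volume K = volume (ball (0 : EE (k + 1)) r)) {ε : ℝ≥0∞} (hε : ε ≠ 0) :
    ∃ K' : Set (EE (k + 1)), MeasurableSet K' ∧ gF K' ≤ gF K ∧ volume (ball 0 r \ K') < ε := by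
  let P : Set (EE (k + 1)) → Prop := fun K' => MeasurableSet K' ∧ K' ⊆ ball 0 R ∧
    volume K' = volume (ball (0 : EE (k + 1)) r) ∧ gF K' ≤ gF K
  set η := sInf {d | ∃ K', P K' ∧ d = volume (ball 0 r \ K')} with hη
  have hBt : volume (ball (0 : EE (k + 1)) r) ≠ ∞ := measure_ball_lt_top.ne
  have hηt : η ≠ ∞ := by
    refine ne_top_of_le_ne_top hBt ?_
    have : η ≤ volume (ball 0 r \ K) := sInf_le ⟨K, ⟨hK, h, hv, le_rfl⟩, rfl⟩
    exact this.trans (measure_mono Set.sdiff_subset)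
  have hη0 : η = 0 := by
    by_contra h0
    set v := volume (ball (0 : EE (k + 1)) (2 * R)) with hvdef
    have hvt : v ≠ ∞ := measure_ball_lt_top.ne
    have hv0 : v ≠ 0 := (measure_ball_pos _ _ (by linarith)).ne'
    have hq0 : η ^ 2 / (2 * v) ≠ 0 := (ENNReal.div_pos (pow_ne_zero _ h0) (by finiteness)).ne'
    have hqt : η ^ 2 / (2 * v) ≠ ∞ := ENNReal.div_ne_top (by finiteness) (by simp [hv0])
    obtain ⟨d, ⟨K', ⟨m1, m2, m3, m4⟩, rfl⟩, hd⟩ := sInf_lt_iff.1 (ENNReal.lt_add_right hηt hq0)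
    have hge : η ≤ volume (ball 0 r \ K') := sInf_le ⟨K', ⟨m1, m2, m3, m4⟩, rfl⟩
    have hB : MeasurableSet (ball (0 : EE (k + 1)) r) := measurableSet_ball
    obtain ⟨z, hz, hz2⟩ := g_exists_z (m1.diff hB) (hB.diff m1) (hr.trans_le hrR) (Set.sdiff_subset.trans m2)
      (Set.sdiff_subset.trans (ball_subset_ball hrR)) (Set.disjoint_left.2 fun x h1 h2 => h1.2 h2.1)
      (g_sdiff_eq m1 hB m3 hBt) (fun h => h0 (le_antisymm (h ▸ hge) bot_le))
    obtain ⟨K2, n1, n2, n3, n4, n5⟩ := g_improve m1 (hr.trans_le hrR) hr m2 z hz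
    have hge2 : η ≤ volume (ball 0 r \ K2) := sInf_le ⟨K2, ⟨n1, n2, n3.trans m3, n4.trans m4⟩, rfl⟩
    have : η + η ^ 2 / (2 * v) ≤ volume (ball 0 r \ K') := by
      refine le_trans (add_le_add hge2 (le_trans ?_ hz2)) n5
      gcongr
    exact absurd hd (not_lt.2 this)
  have : η < ε := by rw [hη0]; exact pos_iff_ne_zero.2 hε
  obtain ⟨d, ⟨K', ⟨m1, m2, m3, m4⟩, rfl⟩, hd⟩ := sInf_lt_iff.1 this
  exact ⟨K', m1, m4, hd⟩

lemma g_groemer {k : ℕ} {K : Set (EE (k + 1))} (hK : MeasurableSet K) {r : ℝ} (hr : 0 < r)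
    (h : Bornology.IsBounded K) (hv : volume K = volume (ball (0 : EE (k + 1)) r)) :
    gF (ball (0 : EE (k + 1)) r) ≤ gF K := by
  obtain ⟨R0, hR0⟩ := h.subset_ball 0
  set R := max R0 r
  have hKR : K ⊆ ball 0 R := hR0.trans (ball_subset_ball (le_max_left _ _))
  obtain ⟨M, hM⟩ : ∃ M, ∀ x ∈ Set.univ.pi (fun _ : Fin (k + 2) => closedBall (0 : EE (k + 1)) r),
      ENNReal.ofReal |gdet x| ≤ ENNReal.ofReal M := by
    obtain ⟨M, hM⟩ := (isCompact_univ_pi fun _ : Fin (k + 2) =>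
      isCompact_closedBall (0 : EE (k + 1)) r).exists_bound_of_continuousOn (continuous_gdet (m := k + 1)).continuousOn
    exact ⟨M, fun x hx => ENNReal.ofReal_le_ofReal (hM x hx)⟩
  set B := ball (0 : EE (k + 1)) r with hBdef
  have hBt : volume B ≠ ∞ := measure_ball_lt_top.ne
  have key : ∀ K' : Set (EE (k + 1)), 
      gF B ≤ gF K' + volume (B \ K') * ((k + 2) * (ENNReal.ofReal M * volume B ^ (k + 1))) := by
    intro K'
    rw [gF_eq, gF_eq]
    let U : Fin (k + 2) → Fin (k + 2) → Set (EE (k + 1)) := fun i => Function.update (fun _ => B) i (B \ K')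
    have hsub : Set.univ.pi (fun _ : Fin (k + 2) => B) ⊆ Set.univ.pi (fun _ : Fin (k + 2) => K') ∪
        ⋃ i, Set.univ.pi (U i) := by
      intro x hx
      by_cases hx' : ∀ i, x i ∈ K'
      · left; exact fun i _ => hx' i
      · right
        push Not at hx'
        obtain ⟨i, hi⟩ := hx'
        refine Set.mem_iUnion.2 ⟨i, fun j _ => ?_⟩
        by_cases hij : j = i
        · subst hij; simpa [U] using ⟨hx j trivial, hi⟩
        · simpa [U, hij] using hx j trivial
    refine (lintegral_mono_set hsub).trans ((lintegral_union_le _ _ _).trans ?_)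
    refine add_le_add le_rfl ((lintegral_iUnion_le _ _).trans ?_)
    rw [tsum_fintype]
    have : ∀ i ∈ Finset.univ, ∫⁻ x in Set.univ.pi (U i), ENNReal.ofReal |gdet x| ≤
        volume (B \ K') * (ENNReal.ofReal M * volume B ^ (k + 1)) := by
      intro i _
      calc _ ≤ ∫⁻ x in Set.univ.pi (U i), ENNReal.ofReal M := by
            refine setLIntegral_mono measurable_const fun x hx => hM x fun j _ => ?_
            have := hx j trivial
            refine ball_subset_closedBall ?_
            by_cases hij : j = i
            · subst hij; simp only [U, Function.update_self] at this; exact this.1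
            · have h' : x j ∈ B := by simpa [U, hij] using this
              exact h'
        _ = _ := by
            rw [setLIntegral_const, volume_pi_pi]
            have : ∀ j, volume (U i j) = Function.update (fun _ => volume B) i (volume (B \ K')) j := by
              intro j
              by_cases hij : j = i
              · subst hij; simp [U]
              · simp [U, hij]
            simp only [this]
            rw [Finset.prod_update_of_mem (Finset.mem_univ i)]
            simp [Finset.card_sdiff]
            ring
    refine (Finset.sum_le_sum this).trans ?_
    simp
    apply le_of_eq; ring
  set Q := ((k : ℝ≥0∞) + 2) * (ENNReal.ofReal M * volume B ^ (k + 1))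
  have hQ : Q ≠ ∞ := by finiteness
  refine ENNReal.le_of_forall_pos_le_add fun ε hε _ => ?_
  obtain ⟨K', k1, k2, k3⟩ := g_approx hK hr (le_max_right R0 r) hKR hv (ε := ε / (Q + 1))
    (ENNReal.div_pos (by simpa using hε.ne') (by finiteness)).ne'
  refine (key K').trans (add_le_add k2 ?_)
  calc _ ≤ ε / (Q + 1) * (Q + 1) := mul_le_mul' k3.le le_self_add
    _ ≤ ε := (ENNReal.div_mul_cancel (by simp) (by finiteness)).le

lemma g_lint_smul {E : Type*} [NormedAddCommGroup E] [NormedSpace ℝ E] [MeasurableSpace E] [BorelSpace E]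
    [FiniteDimensional ℝ E] (μ : Measure E) [μ.IsAddHaarMeasure] {r : ℝ} (hr : 0 < r) (f : E → ℝ≥0∞)
    (hf : Measurable f) :
    ∫⁻ x, f x ∂μ = ENNReal.ofReal r ^ Module.finrank ℝ E * ∫⁻ x, f (r • x) ∂μ := by
  have h1 := Measure.map_addHaar_smul μ hr.ne'
  have h2 : ∫⁻ x, f (r • x) ∂μ = ∫⁻ x, f x ∂(Measure.map (r • ·) μ) :=
    (lintegral_map hf (measurable_const_smul r)).symm
  rw [h2, h1, lintegral_smul_measure, smul_eq_mul, ← mul_assoc, abs_of_pos (by positivity), 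
    ← ENNReal.ofReal_pow hr.le, ← ENNReal.ofReal_mul (by positivity), mul_inv_cancel₀ (by positivity)]
  simp

lemma gF_ball {m : ℕ} {r : ℝ} (hr : 0 < r) :
    gF (ball (0 : EE m) r) = ENNReal.ofReal r ^ ((m + 2) * m) * gF (ball (0 : EE m) 1) := by
  have hm : ∀ r, MeasurableSet (Set.univ.pi (fun _ : Fin (m + 1) => ball (0 : EE m) r)) := fun r =>
    MeasurableSet.univ_pi fun _ => measurableSet_ball
  rw [gF_eq, gF_eq, ← lintegral_indicator (hm _), ← lintegral_indicator (hm _),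
    g_lint_smul volume hr _ (measurable_gdet.indicator (hm _))]
  have : ∀ x : Fin (m + 1) → EE m, (Set.univ.pi (fun _ : Fin (m + 1) => ball (0 : EE m) r)).indicator 
      (fun x => ENNReal.ofReal |gdet x|) (r • x) = ENNReal.ofReal r ^ m * 
       (Set.univ.pi (fun _ : Fin (m + 1) => ball (0 : EE m) 1)).indicator 
      (fun x => ENNReal.ofReal |gdet x|) x := by
    intro x
    have e : (r • x ∈ Set.univ.pi (fun _ : Fin (m + 1) => ball (0 : EE m) r)) ↔ 
      x ∈ Set.univ.pi (fun _ : Fin (m + 1) => ball (0 : EE m) 1) := by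
      simp only [Set.mem_univ_pi, mem_ball_zero_iff, Pi.smul_apply, norm_smul, Real.norm_eq_abs, abs_of_pos hr]
      refine forall_congr' fun i => ?_
      constructor <;> intro h <;> nlinarith
    by_cases hx : x ∈ Set.univ.pi (fun _ : Fin (m + 1) => ball (0 : EE m) 1)
    · rw [Set.indicator_of_mem hx, Set.indicator_of_mem (e.2 hx), show r • x = fun i => r • x i from rfl,
        gdet_smul, abs_mul, ENNReal.ofReal_mul (abs_nonneg _), abs_of_pos (by positivity), ENNReal.ofReal_pow hr.le]
    · rw [Set.indicator_of_notMem hx, Set.indicator_of_notMem (fun h => hx (e.1 h)), mul_zero]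
  simp only [this]
  rw [lintegral_const_mul' _ _ (by finiteness), ← mul_assoc, ← pow_add]
  congr 2
  rw [Module.finrank_pi_fintype]; simp; ring

/-- the sharp lower bound in terms of volume -/
lemma g_lower {k : ℕ} {K : Set (EE (k + 1))} (hK : MeasurableSet K) (h : Bornology.IsBounded K) :
    gF (ball (0 : EE (k + 1)) 1) * (volume K / volume (ball (0 : EE (k + 1)) 1)) ^ (k + 3) ≤ gF K := by
  set v := volume (ball (0 : EE (k + 1)) 1) with hvdef
  have hv0 : v ≠ 0 := (measure_ball_pos _ _ (by linarith)).ne'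
  have hvt : v ≠ ∞ := measure_ball_lt_top.ne
  by_cases h0 : volume K = 0
  · simp [h0]
  have hKt : volume K ≠ ∞ := h.measure_lt_top.ne
  have hqt : volume K / v ≠ ∞ := ENNReal.div_ne_top hKt hv0
  have hq0 : volume K / v ≠ 0 := (ENNReal.div_pos h0 hvt).ne'
  set q := (volume K / v).toReal with hq
  have hqp : 0 < q := ENNReal.toReal_pos hq0 hqt
  set r := q ^ ((1 : ℝ) / (k + 1 : ℕ)) with hr
  have hrp : 0 < r := by positivity
  have hrk : r ^ (k + 1) = q := by
    rw [hr, one_div]; exact Real.rpow_inv_natCast_pow hqp.le (by omega)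
  have hE : ENNReal.ofReal r ^ (k + 1) = volume K / v := by
    rw [← ENNReal.ofReal_pow hrp.le, hrk, hq, ENNReal.ofReal_toReal hqt]
  have hvol : volume K = volume (ball (0 : EE (k + 1)) r) := by
    rw [Measure.addHaar_ball_of_pos _ _ hrp, ENNReal.ofReal_pow hrp.le]
    simp only [finrank_euclideanSpace, Fintype.card_fin]
    rw [hE, ENNReal.div_mul_cancel hv0 hvt]
  refine le_trans (le_of_eq ?_) (g_groemer hK hrp h hvol)
  rw [gF_ball hrp, ← hE, mul_comm, ← pow_mul]
  congr 2; ring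


lemma g_lint_prod' {α : Type*} [MeasureSpace α] [SigmaFinite (volume : Measure α)] (n : ℕ) (f : Fin n → α → ℝ≥0∞)
    (hf : ∀ i, Measurable (f i)) :
    ∫⁻ x : Fin n → α, ∏ i, f i (x i) = ∏ i, ∫⁻ x, f i x := by
  induction n with
  | zero => simp [volume_pi]
  | succ n ih =>
    have h1 := (volume_preserving_piFinSuccAbove (fun _ : Fin (n + 1) => α) 0).symm
    have hm : ∀ n (f : Fin n → α → ℝ≥0∞) (_ : ∀ i, Measurable (f i)),
        Measurable fun x : Fin n → α => ∏ i, f i (x i) := fun n f hf =>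
      Finset.measurable_prod _ fun i _ => (hf i).comp (measurable_pi_apply i)
    rw [← h1.lintegral_comp (hm _ f hf), Measure.volume_eq_prod]
    rw [Fin.prod_univ_succ, ← ih (fun i => f i.succ) (fun i => hf _), ← lintegral_prod_mul (hf 0).aemeasurable
      (hm n _ fun i => hf i.succ).aemeasurable]
    refine lintegral_congr fun p => ?_
    rw [Fin.prod_univ_succ]
    rfl

lemma g_lint_prod {α : Type*} [MeasureSpace α] [SigmaFinite (volume : Measure α)] (f : α → ℝ≥0∞) (hf : Measurable f) (n : ℕ) :
    ∫⁻ x : Fin n → α, ∏ i, f (x i) = (∫⁻ x, f x) ^ n := by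
  rw [g_lint_prod' n (fun _ => f) fun _ => hf]; simp

lemma g_pi_scale {m n : ℕ} (c : Fin n → ℝ) (hc : ∀ i, 0 < c i) (f : (Fin n → EE m) → ℝ≥0∞) (hf : Measurable f) :
    ∫⁻ y : Fin n → EE m, f (fun i => (c i)⁻¹ • y i) = (∏ i, ENNReal.ofReal (c i) ^ m) * ∫⁻ y, f y := by
  have hg : Measurable fun (y : Fin n → EE m) i => (c i)⁻¹ • y i := by fun_prop
  have hprod : (∏ i, ENNReal.ofReal (c i) ^ m) * (∏ i, (ENNReal.ofReal (c i) ^ m)⁻¹) = 1 := by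
    rw [← Finset.prod_mul_distrib]
    refine Finset.prod_eq_one fun i _ => ENNReal.mul_inv_cancel ?_ (by finiteness)
    have := hc i
    positivity
  have key : (volume : Measure (Fin n → EE m)) = (∏ i, (ENNReal.ofReal (c i) ^ m)⁻¹) •
      Measure.map (fun (y : Fin n → EE m) i => (c i)⁻¹ • y i) volume := by
    refine Measure.pi_eq fun s hs => ?_
    rw [Measure.smul_apply, Measure.map_apply hg (MeasurableSet.univ_pi hs)]
    have e : (fun (y : Fin n → EE m) i => (c i)⁻¹ • y i) ⁻¹' (Set.univ.pi s) =
        Set.univ.pi fun i => (fun y : EE m => (c i)⁻¹ • y) ⁻¹' (s i) := by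
      ext y; simp
    rw [e, volume_pi_pi, smul_eq_mul, ← Finset.prod_mul_distrib]
    refine Finset.prod_congr rfl fun i _ => ?_
    rw [Measure.addHaar_preimage_smul _ (inv_ne_zero (hc i).ne')]
    have := hc i
    rw [inv_pow, inv_inv, abs_of_pos (by positivity), ENNReal.ofReal_pow (hc i).le]
    simp only [finrank_euclideanSpace, Fintype.card_fin]
    rw [← mul_assoc, ENNReal.inv_mul_cancel (by positivity) (by finiteness), one_mul]
  conv_rhs => rw [key]
  rw [lintegral_smul_measure, lintegral_map hf hg, smul_eq_mul, ← mul_assoc, hprod, one_mul]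

lemma g_ddet_ae (n : ℕ) : ∀ᵐ X : Fin n → EE n, ddet X ≠ 0 := by
  let Z : Set (Fin n → EE n) := {X | ddet X = 0}
  have hZ : MeasurableSet Z := continuous_ddet.measurable (measurableSet_singleton 0)
  let I : Fin n → EE n := fun i => EuclideanSpace.single i 1
  let T : Set ((Fin n → EE n) × ℝ) := {p | p.1 + p.2 • I ∈ Z}
  have hT : MeasurableSet T := (measurable_fst.add (measurable_snd.smul_const I)) hZ
  have h1 : (volume.prod volume) T = 0 := by
    rw [Measure.prod_apply hT, lintegral_eq_zero_iff (measurable_measure_prodMk_left hT)]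
    refine Filter.Eventually.of_forall fun X => ?_
    refine Set.Finite.measure_zero ?_ _
    have hfin := Polynomial.finite_setOfPred_isRoot (p := (-(Matrix.of fun i j => X i j)).charpoly) 
      (Matrix.charpoly_monic _).ne_zero
    refine hfin.subset fun t ht => ?_
    change Polynomial.eval _ _ = 0
    rw [Matrix.eval_charpoly]
    have ht' : ddet (X + t • I) = 0 := ht
    rw [ddet] at ht'
    rw [← ht']
    congr 1
    ext i j
    simp [I, Matrix.scalar_apply, Matrix.diagonal_apply, Pi.single_apply, eq_comm, add_comm]
  rw [Measure.prod_apply_symm hT] at h1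
  have h2 : ∀ t : ℝ, volume ((fun X => (X, t)) ⁻¹' T) = volume Z := fun t =>
    measure_preimage_add_right volume (t • I) Z
  simp only [h2, lintegral_const, Real.volume_univ] at h1
  rw [ae_iff]
  simp only [not_not]
  rcases mul_eq_zero.1 h1 with h | h
  · exact h
  · simp at h


def gph : ℝ → ℝ≥0∞ := (Set.Ioo (1 : ℝ) 2).indicator 1

lemma gph_meas : Measurable gph := measurable_one.indicator measurableSet_Ioo

lemma gph_pos {s : ℝ} (h : gph s ≠ 0) : 0 < s := by
  have : s ∈ Set.Ioo (1 : ℝ) 2 := by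
    by_contra hs; exact h (Set.indicator_of_notMem hs _)
  linarith [this.1]

def gkap (m : ℕ) : ℝ≥0∞ := ∫⁻ s, gph s * ENNReal.ofReal s ^ m

lemma gkap_ne_zero (m : ℕ) : gkap m ≠ 0 := by
  have : 1 ≤ gkap m := by
    calc (1 : ℝ≥0∞) = ∫⁻ s, gph s := by
          rw [gph, lintegral_indicator_one measurableSet_Ioo, Real.volume_Ioo]; norm_num
      _ ≤ _ := by
          refine lintegral_mono fun s => ?_
          by_cases hs : s ∈ Set.Ioo (1 : ℝ) 2
          · have h1 : (1 : ℝ≥0∞) ≤ ENNReal.ofReal s := by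
              rw [← ENNReal.ofReal_one]; exact ENNReal.ofReal_le_ofReal hs.1.le
            exact le_mul_of_one_le_right' (one_le_pow₀ h1)
          · rw [gph, Set.indicator_of_notMem hs]; simp
  exact (lt_of_lt_of_le one_pos this).ne'

lemma gkap_ne_top (m : ℕ) : gkap m ≠ ∞ := by
  have : gkap m ≤ ENNReal.ofReal 2 ^ m := by
    calc gkap m ≤ ∫⁻ s, gph s * ENNReal.ofReal 2 ^ m := by
          refine lintegral_mono fun s => ?_
          by_cases hs : s ∈ Set.Ioo (1 : ℝ) 2
          · have := ENNReal.ofReal_le_ofReal hs.2.le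
            dsimp only
            gcongr
          · rw [gph, Set.indicator_of_notMem hs]; simp
      _ = _ := by
          rw [lintegral_mul_const _ gph_meas, gph, lintegral_indicator_one measurableSet_Ioo, Real.volume_Ioo]; norm_num
  exact ne_top_of_le_ne_top (by finiteness) this

def gchi {n : ℕ} (S : Set (EE n)) : EE n → ℝ≥0∞ := S.indicator 1

lemma gchi_meas {n : ℕ} {S : Set (EE n)} (hS : MeasurableSet S) : Measurable (gchi S) := measurable_one.indicator hS

def gPhi {n : ℕ} (S : Set (EE n)) (p : EE n) (X : Fin n → EE n) : ℝ≥0∞ :=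
  ENNReal.ofReal |ddet fun i => (inner ℝ (X i) p)⁻¹ • X i| *
    ∏ i, (gph (inner ℝ (X i) p) * gchi S ((inner ℝ (X i) p)⁻¹ • X i))

lemma gPhi_meas {n : ℕ} {S : Set (EE n)} (hS : MeasurableSet S) :
    Measurable fun q : EE n × (Fin n → EE n) => gPhi S q.1 q.2 := by
  have h0 : ∀ i, Measurable fun q : EE n × (Fin n → EE n) => (inner ℝ (q.2 i) q.1 : ℝ) := fun i =>
    Continuous.measurable (by fun_prop)
  have h0' : ∀ i, Measurable fun q : EE n × (Fin n → EE n) => q.2 i := fun i => by fun_prop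
  have h1 : ∀ i, Measurable fun q : EE n × (Fin n → EE n) => (inner ℝ (q.2 i) q.1 : ℝ)⁻¹ • q.2 i := fun i =>
    (h0 i).inv.smul (h0' i)
  refine Measurable.mul ?_ (Finset.measurable_prod _ fun i _ => ?_)
  · exact (ENNReal.continuous_ofReal.comp continuous_ddet.abs).measurable.comp (measurable_pi_lambda _ h1)
  · exact (gph_meas.comp (h0 i)).mul ((gchi_meas hS).comp (h1 i))

lemma gPhi_meas' {n : ℕ} {S : Set (EE n)} (hS : MeasurableSet S) (p : EE n) :
    Measurable (fun X => gPhi S p X) := by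
  have h0 : ∀ i, Measurable fun q : (Fin n → EE n) => (inner ℝ (q i) p : ℝ) := fun i =>
    Continuous.measurable (by fun_prop)
  have h0' : ∀ i, Measurable fun q : (Fin n → EE n) => q i := fun i => by fun_prop
  have h1 : ∀ i, Measurable fun q : (Fin n → EE n) => (inner ℝ (q i) p : ℝ)⁻¹ • q i := fun i =>
    (h0 i).inv.smul (h0' i)
  refine Measurable.mul ?_ (Finset.measurable_prod _ fun i _ => ?_)
  · exact (ENNReal.continuous_ofReal.comp continuous_ddet.abs).measurable.comp (measurable_pi_lambda _ h1)
  · exact (gph_meas.comp (h0 i)).mul ((gchi_meas hS).comp (h1 i))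

lemma gPhi_A1 {n : ℕ} {S : Set (EE n)} (hS : MeasurableSet S) (X : Fin n → EE n) (hX : ddet X ≠ 0) :
    ∫⁻ p, gPhi S p X = ∏ i, ∫⁻ s, (ENNReal.ofReal |s⁻¹| * (gph s * gchi S (s⁻¹ • X i))) := by
  have hm : ∀ i, Measurable fun s : ℝ => ENNReal.ofReal |s⁻¹| * (gph s * gchi S (s⁻¹ • X i)) := fun i => by
    refine Measurable.mul (by fun_prop) (gph_meas.mul ((gchi_meas hS).comp (by fun_prop)))
  rw [← g_lint_prod' n _ hm]
  set M : Matrix (Fin n) (Fin n) ℝ := Matrix.of fun i j => X i j with hM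
  have hdet : M.det ≠ 0 := hX
  set G : (Fin n → ℝ) → ℝ≥0∞ := fun s => ∏ i, (ENNReal.ofReal |(s i)⁻¹| * (gph (s i) * gchi S ((s i)⁻¹ • X i))) with hG
  have hGm : Measurable G := Finset.measurable_prod _ fun i _ => (hm i).comp (measurable_pi_apply i)
  have e : ∀ p : EE n, gPhi S p X = ENNReal.ofReal |M.det| * G (Matrix.toLin' M p.ofLp) := by
    intro p
    have hin : ∀ i, Matrix.toLin' M p.ofLp i = inner ℝ (X i) p := by
      intro i
      simp [hM, Matrix.mulVec, dotProduct, PiLp.inner_apply, mul_comm]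
    rw [gPhi, ddet_smul, abs_mul, ENNReal.ofReal_mul (abs_nonneg _), Finset.abs_prod,
      ENNReal.ofReal_prod_of_nonneg (fun _ _ => abs_nonneg _), hG]
    simp only [hin, Finset.prod_mul_distrib]
    rw [show M.det = ddet X from rfl]
    ring
  simp only [e]
  rw [lintegral_const_mul' _ _ (by finiteness)]
  have h3 : ∫⁻ p : EE n, G (Matrix.toLin' M p.ofLp) = ∫⁻ q : Fin n → ℝ, G (Matrix.toLin' M q) :=
    (PiLp.volume_preserving_ofLp (Fin n)).lintegral_comp (f := fun q => G (Matrix.toLin' M q))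
      (hGm.comp (LinearMap.continuous_of_finiteDimensional _).measurable)
  rw [h3, ← lintegral_map hGm (LinearMap.continuous_of_finiteDimensional _).measurable,
    Real.map_matrix_volume_pi_eq_smul_volume_pi hdet, lintegral_smul_measure, smul_eq_mul, ← mul_assoc,
    ← ENNReal.ofReal_mul (abs_nonneg _), ← abs_mul, mul_inv_cancel₀ hdet]
  simp

lemma gPhi_A {m : ℕ} {S : Set (EE (m + 1))} (hS : MeasurableSet S) :
    ∫⁻ p, ∫⁻ X, gPhi S p X = gkap m ^ (m + 1) * volume S ^ (m + 1) := by
  rw [lintegral_lintegral_swap (gPhi_meas hS).aemeasurable]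
  have h1 : ∀ᵐ X : Fin (m + 1) → EE (m + 1), ∫⁻ p, gPhi S p X = 
     ∏ i, ∫⁻ s, (ENNReal.ofReal |s⁻¹| * (gph s * gchi S (s⁻¹ • X i))) := by
    filter_upwards [g_ddet_ae (m + 1)] with X hX using gPhi_A1 hS X hX
  have hm : Measurable fun q : EE (m + 1) × ℝ => ENNReal.ofReal |q.2⁻¹| * (gph q.2 * gchi S (q.2⁻¹ • q.1)) := by
    refine Measurable.mul (by fun_prop) ((gph_meas.comp measurable_snd).mul ((gchi_meas hS).comp ?_))
    exact measurable_snd.inv.smul measurable_fst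
  have hg : Measurable fun s : ℝ => gph s * ENNReal.ofReal s ^ m := gph_meas.mul (by fun_prop)
  rw [lintegral_congr_ae h1, g_lint_prod (fun x : EE (m + 1) => ∫⁻ s, (ENNReal.ofReal |s⁻¹| * (gph s * gchi S (s⁻¹ • x))))
      (Measurable.lintegral_prod_right hm), ← mul_pow,
    lintegral_lintegral_swap hm.aemeasurable, gkap, ← lintegral_mul_const _ hg]
  congr 1
  refine lintegral_congr fun s => ?_
  by_cases hs : gph s = 0
  · simp [hs]
  have hs0 := gph_pos hs
  have hch : Measurable fun x : EE (m + 1) => gchi S (s⁻¹ • x) := (gchi_meas hS).comp (measurable_const_smul s⁻¹)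
  rw [lintegral_const_mul' _ _ (by finiteness), lintegral_const_mul _ hch]
  have h2 : ∫⁻ x, gchi S (s⁻¹ • x) = ENNReal.ofReal s ^ (m + 1) * volume S := by
    have := g_lint_smul (E := EE (m + 1)) volume hs0 _ ((gchi_meas hS).comp (measurable_const_smul s⁻¹))
    simp only [Function.comp_apply, smul_smul, inv_mul_cancel₀ hs0.ne', one_smul, finrank_euclideanSpace, Fintype.card_fin] at this
    rw [this, gchi, lintegral_indicator_one hS]
  rw [h2, abs_of_pos (by positivity), ENNReal.ofReal_inv_of_pos hs0, pow_succ']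
  have : (ENNReal.ofReal s)⁻¹ * ENNReal.ofReal s = 1 := ENNReal.inv_mul_cancel (by simpa using hs0) (by simp)
  calc _ = ((ENNReal.ofReal s)⁻¹ * ENNReal.ofReal s) * (gph s * ENNReal.ofReal s ^ m * volume S) := by ring
    _ = _ := by rw [this, one_mul]

/-- section of `S` in coordinates given by a linear isometry -/
def gK {m : ℕ} (ρ : EE (m + 1) ≃ₗᵢ[ℝ] EE (m + 1)) (S : Set (EE (m + 1))) (t : ℝ) : Set (EE m) :=
  {y | ρ.symm (gcns m (t, y)) ∈ S}

lemma gK_meas {m : ℕ} (ρ : EE (m + 1) ≃ₗᵢ[ℝ] EE (m + 1)) {S : Set (EE (m + 1))} (hS : MeasurableSet S) (t : ℝ) :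
    MeasurableSet (gK ρ S t) :=
  (ρ.symm.continuous.measurable.comp ((gcns m).measurable.comp measurable_prodMk_left)) hS

lemma gF_prod {m : ℕ} {K : Set (EE m)} (hK : MeasurableSet K) :
    gF K = ∫⁻ y : Fin (m + 1) → EE m, ENNReal.ofReal |gdet y| * ∏ i, gchi K (y i) := by
  rw [gF_eq, ← lintegral_indicator (MeasurableSet.univ_pi fun _ => hK)]
  refine lintegral_congr fun y => ?_
  by_cases hy : y ∈ Set.univ.pi fun _ : Fin (m + 1) => K
  · rw [Set.indicator_of_mem hy, Finset.prod_eq_one, mul_one]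
    intro i _
    rw [gchi, Set.indicator_of_mem (hy i trivial)]; rfl
  · rw [Set.indicator_of_notMem hy]
    simp only [Set.mem_univ_pi, not_forall] at hy
    obtain ⟨i, hi⟩ := hy
    rw [Finset.prod_eq_zero (Finset.mem_univ i), mul_zero]
    rw [gchi, Set.indicator_of_notMem hi]

def gcnsPi' {m : ℕ} (ρ : EE (m + 1) ≃ₗᵢ[ℝ] EE (m + 1)) :
    ((Fin (m + 1) → ℝ) × (Fin (m + 1) → EE m)) ≃ᵐ (Fin (m + 1) → EE (m + 1)) :=
  (MeasurableEquiv.arrowProdEquivProdArrow ℝ (EE m) (Fin (m + 1))).symm.trans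
    (MeasurableEquiv.piCongrRight fun _ => (gcns m).trans ρ.symm.toMeasurableEquiv)

lemma gcnsPi'_apply {m : ℕ} (ρ : EE (m + 1) ≃ₗᵢ[ℝ] EE (m + 1)) (p) (i) :
    gcnsPi' ρ p i = ρ.symm (gcns m (p.1 i, p.2 i)) := rfl

lemma gcnsPi'_mp {m : ℕ} (ρ : EE (m + 1) ≃ₗᵢ[ℝ] EE (m + 1)) : MeasurePreserving (gcnsPi' ρ) volume volume := by
  have h1 := (volume_measurePreserving_arrowProdEquivProdArrow ℝ (EE m) (Fin (m + 1))).symm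
  have h2 := volume_preserving_pi (ι := Fin (m + 1)) (f := fun _ x => ρ.symm (gcns m x)) fun _ =>
    ρ.symm.measurePreserving.comp (gcns_mp m)
  exact h2.comp h1

lemma gPhi_B {m : ℕ} {S : Set (EE (m + 1))} (hS : MeasurableSet S)
    (b : OrthonormalBasis (Fin (m + 1)) ℝ (EE (m + 1))) {r : ℝ} (hr : 0 < r) :
    ∫⁻ X, gPhi S (r • b 0) X =
      ENNReal.ofReal r⁻¹ * (ENNReal.ofReal r⁻¹ * gkap m) ^ (m + 1) * gF (gK b.repr S r⁻¹) := by
  set ρ := b.repr with hρ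
  have hΦ : Measurable (gPhi S (r • b 0)) := gPhi_meas' hS _
  rw [← (gcnsPi'_mp ρ).lintegral_comp hΦ, Measure.volume_eq_prod]
  refine (lintegral_prod _ (hΦ.comp (gcnsPi' ρ).measurable).aemeasurable).trans ?_
  have hin : ∀ (u : Fin (m + 1) → ℝ) y i, (inner ℝ (gcnsPi' ρ (u, y) i) (r • b 0) : ℝ) = r * u i := by
    intro u y i
    have : (inner ℝ (ρ.symm (gcns m (u i, y i))) (b 0) : ℝ) = inner ℝ (gcns m (u i, y i)) (ρ (b 0)) := by
      rw [← ρ.inner_map_map]; simp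
    rw [inner_smul_right, gcnsPi'_apply, this, hρ, g_repr, gcns_inner]; simp
  set K := gK ρ S r⁻¹ with hK
  have hKm : MeasurableSet K := gK_meas ρ hS _
  have hKc : Measurable fun y : Fin (m + 1) → EE m => ENNReal.ofReal |gdet y| * ∏ i, gchi K (y i) :=
    measurable_gdet.mul (Finset.measurable_prod _ fun i _ => (gchi_meas hKm).comp (measurable_pi_apply i))
  have key : ∀ u : Fin (m + 1) → ℝ, ∫⁻ y, gPhi S (r • b 0) (gcnsPi' ρ (u, y)) =
      (∏ i, (gph (r * u i) * ENNReal.ofReal (r * u i) ^ m)) * (ENNReal.ofReal r⁻¹ * gF K) := by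
    intro u
    by_cases h0 : ∃ i, gph (r * u i) = 0
    · obtain ⟨i, hi⟩ := h0
      rw [Finset.prod_eq_zero (Finset.mem_univ i) (by rw [hi, zero_mul]), zero_mul]
      refine (lintegral_congr fun y => ?_).trans lintegral_zero
      rw [gPhi, Finset.prod_eq_zero (Finset.mem_univ i) (by rw [hin, hi, zero_mul]), mul_zero]
    push Not at h0
    have hpos : ∀ i, 0 < r * u i := fun i => gph_pos (h0 i)
    have hpt : ∀ y, gPhi S (r • b 0) (gcnsPi' ρ (u, y)) = (∏ i, gph (r * u i)) * (ENNReal.ofReal r⁻¹ *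
        (fun y : Fin (m + 1) → EE m => ENNReal.ofReal |gdet y| * ∏ i, gchi K (y i)) (fun i => (r * u i)⁻¹ • y i)) := by
      intro y
      have hX : ∀ i, (r * u i)⁻¹ • gcnsPi' ρ (u, y) i = ρ.symm (gcns m (r⁻¹, (r * u i)⁻¹ • y i)) := by
        intro i
        rw [gcnsPi'_apply, ← map_smul, ← gcns_smul]
        congr 2
        have := hpos i
        have hu : u i ≠ 0 := fun h => by simp [h] at this
        simp only [Prod.smul_mk, smul_eq_mul, Prod.mk.injEq, and_true]
        field_simp
      have hc : ∀ y', gchi S (ρ.symm (gcns m (r⁻¹, y'))) = gchi K y' := by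
        intro y'
        simp only [gchi, Set.indicator, hK, gK, Set.mem_ofPred_eq]
        rfl
      rw [gPhi]
      simp only [hin, hX, hc]
      rw [ddet_isom ρ.symm (fun i => gcns m (r⁻¹, (r * u i)⁻¹ • y i)), ddet_gcns, abs_mul, abs_of_pos (inv_pos.2 hr),
        ENNReal.ofReal_mul (inv_pos.2 hr).le, Finset.prod_mul_distrib]
      ring
    simp only [hpt]
    have hm2 : Measurable fun y : Fin (m + 1) → EE m =>
       (fun y : Fin (m + 1) → EE m => ENNReal.ofReal |gdet y| * ∏ i, gchi K (y i)) (fun i => (r * u i)⁻¹ • y i) :=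
      hKc.comp (by fun_prop)
    rw [lintegral_const_mul _ (hm2.const_mul _), lintegral_const_mul _ hm2, g_pi_scale _ hpos _ hKc, ← gF_prod hKm,
      Finset.prod_mul_distrib]
    ring
  refine (lintegral_congr key).trans ?_
  have hg : Measurable fun s : ℝ => gph s * ENNReal.ofReal s ^ m := gph_meas.mul (by fun_prop)
  have hg2 : Measurable fun s : ℝ => gph (r * s) * ENNReal.ofReal (r * s) ^ m := hg.comp (measurable_const_mul r)
  have hg3 : Measurable fun u : Fin (m + 1) → ℝ => ∏ i, (gph (r * u i) * ENNReal.ofReal (r * u i) ^ m) :=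
    Finset.measurable_prod _ fun i _ => hg2.comp (measurable_pi_apply i)
  rw [lintegral_mul_const _ hg3, g_lint_prod _ hg2]
  have h5 := g_lint_smul (volume : Measure ℝ) hr _ hg
  have h6 : ∫⁻ s, gph (r * s) * ENNReal.ofReal (r * s) ^ m = ENNReal.ofReal r⁻¹ * gkap m := by
    rw [gkap, h5, ← mul_assoc]
    simp only [Module.finrank_self, pow_one, smul_eq_mul]
    rw [← ENNReal.ofReal_mul (by positivity), inv_mul_cancel₀ hr.ne']
    simp
  rw [h6]; ring


lemma g_polar {m : ℕ} (J : EE (m + 1) → ℝ≥0∞) (hJ : Measurable J) :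
    ∫⁻ p, J p = ∫⁻ θ, (∫⁻ r in Set.Ioi (0 : ℝ), ENNReal.ofReal (r ^ m) * J (r • (θ : EE (m + 1))))
      ∂((volume : Measure (EE (m + 1))).toSphere) := by
  have h1 := (volume : Measure (EE (m + 1))).measurePreserving_homeomorphUnitSphereProd
  have hdim : Module.finrank ℝ (EE (m + 1)) - 1 = m := by simp
  rw [hdim] at h1
  have hJ' : Measurable fun q : sphere (0 : EE (m + 1)) 1 × Set.Ioi (0 : ℝ) => J ((q.2 : ℝ) • (q.1 : EE (m + 1))) :=
    hJ.comp ((measurable_subtype_coe.comp measurable_snd).smul (measurable_subtype_coe.comp measurable_fst))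
  have h2 : ∫⁻ p, J p = ∫⁻ p : ({0}ᶜ : Set (EE (m + 1))), J p ∂(Measure.comap Subtype.val volume) := by
    rw [lintegral_subtype_comap (measurableSet_singleton 0).compl, restrict_compl_singleton]
  have h3 : ∀ p : ({0}ᶜ : Set (EE (m + 1))), J p = (fun q : sphere (0 : EE (m + 1)) 1 × Set.Ioi (0 : ℝ) => 
      J ((q.2 : ℝ) • (q.1 : EE (m + 1)))) (homeomorphUnitSphereProd (EE (m + 1)) p) := by
    intro p
    have hp : ‖(p : EE (m + 1))‖ ≠ 0 := norm_ne_zero_iff.2 p.2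
    simp [smul_smul, hp]
  rw [h2, lintegral_congr h3, h1.lintegral_comp hJ', lintegral_prod _ hJ'.aemeasurable]
  refine lintegral_congr fun θ => ?_
  have hJ2 : Measurable fun r : ℝ => J (r • (θ : EE (m + 1))) := hJ.comp (measurable_id.smul_const _)
  rw [Measure.volumeIoiPow]
  refine (lintegral_withDensity_eq_lintegral_mul _ (by fun_prop) (hJ2.comp measurable_subtype_coe)).trans ?_
  exact lintegral_subtype_comap measurableSet_Ioi (fun r => ENNReal.ofReal (r ^ m) * J (r • (θ : EE (m + 1))))

lemma g_inv_subst (g : ℝ → ℝ≥0∞) :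
    ∫⁻ t in Set.Ioi (0 : ℝ), g t = ∫⁻ r in Set.Ioi (0 : ℝ), ENNReal.ofReal ((r ^ 2)⁻¹) * g r⁻¹ := by
  have himg : (fun r : ℝ => r⁻¹) '' Set.Ioi 0 = Set.Ioi 0 := by
    ext x
    constructor
    · rintro ⟨y, hy, rfl⟩; exact Set.mem_Ioi.2 (inv_pos.2 (Set.mem_Ioi.1 hy))
    · intro hx; exact ⟨x⁻¹, Set.mem_Ioi.2 (inv_pos.2 (Set.mem_Ioi.1 hx)), inv_inv x⟩
  have := lintegral_image_eq_lintegral_abs_deriv_mul (s := Set.Ioi (0 : ℝ)) (f := fun r => r⁻¹) 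
    (f' := fun r => -(r ^ 2)⁻¹) measurableSet_Ioi (fun x hx => (hasDerivAt_inv (ne_of_gt hx)).hasDerivWithinAt)
    (inv_injective.injOn) g
  rw [himg] at this
  rw [this]
  refine setLIntegral_congr_fun measurableSet_Ioi fun r hr => ?_
  simp only [abs_neg, abs_of_nonneg (inv_nonneg.2 (sq_nonneg r))]

lemma g_BP {m : ℕ} {S : Set (EE (m + 1))} (hS : MeasurableSet S)
    (b : sphere (0 : EE (m + 1)) 1 → OrthonormalBasis (Fin (m + 1)) ℝ (EE (m + 1)))
    (hb : ∀ θ, b θ 0 = (θ : EE (m + 1))) :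
    ∫⁻ θ, (∫⁻ t in Set.Ioi (0 : ℝ), gF (gK (b θ).repr S t)) ∂((volume : Measure (EE (m + 1))).toSphere) =
      volume S ^ (m + 1) ∧
    Measurable fun θ => (∫⁻ t in Set.Ioi (0 : ℝ), gF (gK (b θ).repr S t)) := by
  have hA := gPhi_A hS
  rw [g_polar _ (Measurable.lintegral_prod_right (gPhi_meas hS))] at hA
  have hk0 : gkap m ^ (m + 1) ≠ 0 := pow_ne_zero _ (gkap_ne_zero m)
  have hkt : gkap m ^ (m + 1) ≠ ∞ := ENNReal.pow_ne_top (gkap_ne_top m)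
  have h1 : ∀ θ : sphere (0 : EE (m + 1)) 1, 
      ∫⁻ r in Set.Ioi (0 : ℝ), ENNReal.ofReal (r ^ m) * ∫⁻ X, gPhi S (r • (θ : EE (m + 1))) X =
      gkap m ^ (m + 1) * ∫⁻ t in Set.Ioi (0 : ℝ), gF (gK (b θ).repr S t) := by
    intro θ
    rw [g_inv_subst (fun t => gF (gK (b θ).repr S t)), ← lintegral_const_mul' _ _ hkt]
    refine setLIntegral_congr_fun measurableSet_Ioi fun r hr' => ?_
    have hr : 0 < r := hr'
    rw [← hb θ, gPhi_B hS (b θ) hr, mul_pow, ← ENNReal.ofReal_pow (by positivity)]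
    have e : (r ^ 2)⁻¹ = r ^ m * (r⁻¹ * r⁻¹ ^ (m + 1)) := by
      rw [inv_pow, pow_succ]; field_simp; ring
    rw [e, ENNReal.ofReal_mul (by positivity), ENNReal.ofReal_mul (by positivity)]
    ring
  simp only [h1] at hA
  rw [lintegral_const_mul' _ _ hkt] at hA
  refine ⟨(ENNReal.mul_right_inj hk0 hkt).1 hA, ?_⟩
  have hJ : Measurable fun p : EE (m + 1) => ∫⁻ X, gPhi S p X := Measurable.lintegral_prod_right (gPhi_meas hS)
  have hJ2 : Measurable fun q : sphere (0 : EE (m + 1)) 1 × ℝ =>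
      ENNReal.ofReal (q.2 ^ m) * ∫⁻ X, gPhi S (q.2 • (q.1 : EE (m + 1))) X :=
    Measurable.mul (by fun_prop) (hJ.comp (measurable_snd.smul (measurable_subtype_coe.comp measurable_fst)))
  have hJ3 : Measurable fun θ : sphere (0 : EE (m + 1)) 1 =>
      ∫⁻ r in Set.Ioi (0 : ℝ), ENNReal.ofReal (r ^ m) * ∫⁻ X, gPhi S (r • (θ : EE (m + 1))) X :=
    Measurable.lintegral_prod_right hJ2
  simp only [h1] at hJ3
  have := hJ3.const_mul (gkap m ^ (m + 1))⁻¹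
  simp only [← mul_assoc, ENNReal.inv_mul_cancel hk0 hkt, one_mul] at this
  exact this

lemma gK_neg {m : ℕ} (ρ : EE (m + 1) ≃ₗᵢ[ℝ] EE (m + 1)) {S : Set (EE (m + 1))} (hS : MeasurableSet S) (t : ℝ) :
    gF (gK ρ S (-t)) = gF (gK ρ (Neg.neg ⁻¹' S) t) := by
  have : gK ρ S (-t) = (LinearIsometryEquiv.neg ℝ (E := EE m)) ⁻¹' (gK ρ (Neg.neg ⁻¹' S) t) := by
    ext y
    simp only [gK, Set.mem_ofPred_eq, Set.mem_preimage, LinearIsometryEquiv.coe_neg]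
    rw [← map_neg, show gcns m (-t, y) = - gcns m (t, -y) by
      rw [show ((-t, y) : ℝ × EE m) = (-1 : ℝ) • (t, -y) by simp, gcns_smul]; simp]
  rw [this, gF_isom _ _ (gK_meas _ (measurable_neg hS) _)]

lemma g_BP2 {m : ℕ} {S : Set (EE (m + 1))} (hS : MeasurableSet S)
    (b : sphere (0 : EE (m + 1)) 1 → OrthonormalBasis (Fin (m + 1)) ℝ (EE (m + 1)))
    (hb : ∀ θ, b θ 0 = (θ : EE (m + 1))) :
    ∫⁻ θ, (∫⁻ t : ℝ, gF (gK (b θ).repr S t)) ∂((volume : Measure (EE (m + 1))).toSphere) =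
      2 * volume S ^ (m + 1) := by
  have hS' : MeasurableSet (Neg.neg ⁻¹' S) := measurable_neg hS
  obtain ⟨h1, h2⟩ := g_BP hS b hb
  obtain ⟨h3, h4⟩ := g_BP hS' b hb
  rw [Measure.measure_preimage_neg] at h3
  have key : ∀ θ, (∫⁻ t : ℝ, gF (gK (b θ).repr S t)) = (∫⁻ t in Set.Ioi (0 : ℝ), gF (gK (b θ).repr S t)) +
     (∫⁻ t in Set.Ioi (0 : ℝ), gF (gK (b θ).repr (Neg.neg ⁻¹' S) t)) := by
    intro θ
    rw [← lintegral_add_compl _ (measurableSet_Ioi (a := (0 : ℝ))), Set.compl_Ioi, ← setLIntegral_congr Iio_ae_eq_Iic]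
    congr 1
    simp only [← gK_neg _ hS]
    have := (Measure.measurePreserving_neg (volume : Measure ℝ)).setLIntegral_comp_preimage_emb
      (MeasurableEquiv.neg ℝ).measurableEmbedding (fun t => gF (gK (b θ).repr S t)) (Set.Iio 0)
    rw [← this]
    congr 2
    ext t; simp
  simp only [key]
  rw [lintegral_add_left h2, h1, h3, two_mul]


lemma g_sectVol {m : ℕ} {S : Set (EE (m + 1))} (hS : MeasurableSet S) (θ : sphere (0 : EE (m + 1)) 1)
    (b : OrthonormalBasis (Fin (m + 1)) ℝ (EE (m + 1))) (hb : b 0 = (θ : EE (m + 1))) (t : ℝ) :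
    sectVol (m + 1) S θ t = volume (gK b.repr S t) := by
  have hθ : (θ : EE (m + 1)) ≠ 0 := by
    intro h; have := norm_eq_of_mem_sphere θ; rw [h] at this; simp at this
  let f : EE m →ₗ[ℝ] EE (m + 1) :=
    { toFun := fun y => b.repr.symm (gcns m (0, y))
      map_add' := fun x y => by
        rw [← map_add, ← gcns_add]; simp
      map_smul' := fun c y => by
        rw [RingHom.id_apply, ← map_smul, ← gcns_smul]; simp }
  have hf : ∀ y, f y ∈ (ℝ ∙ (θ : EE (m + 1)))ᗮ := by
    intro y
    rw [Submodule.mem_orthogonal_singleton_iff_inner_right, ← hb]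
    change inner ℝ (b 0) (b.repr.symm (gcns m (0, y))) = 0
    rw [← b.repr.inner_map_map, g_repr]
    simp [gcns_inner]
  let g : EE m →ₗᵢ[ℝ] (ℝ ∙ (θ : EE (m + 1)))ᗮ :=
    { toLinearMap := f.codRestrict _ hf
      norm_map' := fun y => by
        change ‖b.repr.symm (gcns m (0, y))‖ = ‖y‖
        rw [LinearIsometryEquiv.norm_map, ← sq_eq_sq₀ (norm_nonneg _) (norm_nonneg _), gcns_norm_sq]; simp }
  have : Fact (Module.finrank ℝ (EE (m + 1)) = m + 1) := ⟨by simp⟩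
  let L := g.toLinearIsometryEquiv (by
    rw [Submodule.finrank_orthogonal_span_singleton (n := m) hθ]; simp)
  have hL : ∀ y, ((L y : (ℝ ∙ (θ : EE (m + 1)))ᗮ) : EE (m + 1)) = b.repr.symm (gcns m (0, y)) := fun y => rfl
  have hm : MeasurableSet {y : ((ℝ ∙ (θ : EE (m + 1)))ᗮ) | t • (θ : EE (m + 1)) + (y : EE (m + 1)) ∈ S} :=
    (measurable_subtype_coe.const_add _) hS
  rw [sectVol, ← L.measurePreserving.measure_preimage hm.nullMeasurableSet]
  congr 1
  ext y
  simp only [Set.mem_preimage, Set.mem_ofPred_eq, hL, gK]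
  have : t • (θ : EE (m + 1)) + b.repr.symm (gcns m (0, y)) = b.repr.symm (gcns m (t, y)) := by
    have e : (t, y) = t • ((1 : ℝ), (0 : EE m)) + (0, y) := by simp
    rw [e, gcns_add, gcns_smul, map_add, map_smul, ← g_repr b, hb]; simp
  rw [this]

lemma gK_bdd {m : ℕ} (ρ : EE (m + 1) ≃ₗᵢ[ℝ] EE (m + 1)) {S : Set (EE (m + 1))} (hS : Bornology.IsBounded S) (t : ℝ) :
    Bornology.IsBounded (gK ρ S t) := by
  obtain ⟨R, hR⟩ := hS.subset_ball 0
  refine (isBounded_ball (x := (0 : EE m)) (r := R)).subset fun y hy => ?_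
  have h1 := hR hy
  rw [mem_ball_zero_iff, LinearIsometryEquiv.norm_map] at h1
  rw [mem_ball_zero_iff]
  refine lt_of_le_of_lt ?_ h1
  rw [← sq_le_sq₀ (norm_nonneg _) (norm_nonneg _), gcns_norm_sq]
  simp; positivity

lemma gK_ball {m : ℕ} (ρ : EE (m + 1) ≃ₗᵢ[ℝ] EE (m + 1)) (t : ℝ) :
    gK ρ (ball 0 1) t = ball 0 √(1 - t ^ 2) := by
  ext y
  simp only [gK, Set.mem_ofPred_eq, mem_ball_zero_iff, LinearIsometryEquiv.norm_map]
  rw [Real.lt_sqrt (norm_nonneg _), ← sq_lt_sq₀ (norm_nonneg _) one_pos.le, gcns_norm_sq]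
  constructor <;> intro h <;> simp only at * <;> linarith

lemma gF_ball' {m : ℕ} (hm : 0 < m) {r : ℝ} (hr : 0 ≤ r) :
    gF (ball (0 : EE m) r) = ENNReal.ofReal r ^ ((m + 2) * m) * gF (ball (0 : EE m) 1) := by
  rcases hr.eq_or_lt with rfl | h
  · rw [gF_eq]; simp [hm.ne']
  · exact gF_ball h

lemma g_vol_slice (M : ℕ) (hM : 0 < M) :
    volume (ball (0 : EE (M + 1)) 1) = (∫⁻ t : ℝ, ENNReal.ofReal √(1 - t ^ 2) ^ M) * volume (ball (0 : EE M) 1) := by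
  have : Nonempty (Fin M) := ⟨⟨0, hM⟩⟩
  have hB : MeasurableSet (ball (0 : EE (M + 1)) 1) := measurableSet_ball
  rw [← (gcns_mp M).measure_preimage hB.nullMeasurableSet, Measure.volume_eq_prod,
    Measure.prod_apply ((gcns M).measurable hB), ← lintegral_mul_const _ (by fun_prop)]
  refine lintegral_congr fun t => ?_
  have : Prod.mk t ⁻¹' (gcns M ⁻¹' ball 0 1) = ball 0 √(1 - t ^ 2) :=
    gK_ball (LinearIsometryEquiv.refl ℝ _) t
  rw [this, Measure.addHaar_ball _ _ (Real.sqrt_nonneg _), ENNReal.ofReal_pow (Real.sqrt_nonneg _)]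
  simp

lemma g_ballVol (m : ℕ) (hm : 0 < m) : ENNReal.ofReal (ballVol m) = volume (ball (0 : EE m) 1) := by
  have : Nonempty (Fin m) := ⟨⟨0, hm⟩⟩
  rw [EuclideanSpace.volume_ball, ballVol]
  simp only [ENNReal.ofReal_one, one_pow, one_mul, Fintype.card_fin]
  congr 2
  rw [Real.sqrt_eq_rpow, ← Real.rpow_natCast, ← Real.rpow_mul Real.pi_pos.le]
  congr 1; ring

lemma g_ballVol_pos (m : ℕ) : 0 < ballVol m :=
  div_pos (Real.rpow_pos_of_pos Real.pi_pos _) (Real.Gamma_pos_of_pos (by positivity))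

lemma g_main (k : ℕ) (S : Set (EE (k + 2))) (hS : MeasurableSet S) (hSb : Bornology.IsBounded S) :
    (∫⁻ θ, (∫⁻ t : ℝ, sectVol (k + 2) S θ t ^ (k + 3)) ∂(sphMeasure (k + 2))) ≤
      volume (ball (0 : EE (k + 1)) 1) ^ (k + 3) * volume (ball (0 : EE ((k + 3) * (k + 1) + 1)) 1) /
        (volume (ball (0 : EE (k + 2)) 1) ^ (k + 2) * volume (ball (0 : EE ((k + 3) * (k + 1))) 1)) *
        volume S ^ (k + 2) := by
  have hbe : ∀ θ : sphere (0 : EE (k + 2)) 1, ∃ b : OrthonormalBasis (Fin (k + 2)) ℝ (EE (k + 2)), b 0 = (θ : EE (k + 2)) :=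
    fun θ => g_exists_basis _ (norm_eq_of_mem_sphere θ)
  choose b hb using hbe
  set c := gF (ball (0 : EE (k + 1)) 1) with hc
  set v := volume (ball (0 : EE (k + 1)) 1) with hv
  set w := volume (ball (0 : EE (k + 2)) 1) with hw
  set σ := (volume : Measure (EE (k + 2))).toSphere Set.univ with hσ
  set M := (k + 3) * (k + 1) with hM
  set B0 := volume (ball (0 : EE M) 1) with hB0
  set I := ∫⁻ t : ℝ, ENNReal.ofReal √(1 - t ^ 2) ^ M with hI
  have pos : ∀ j : ℕ, volume (ball (0 : EE j) 1) ≠ 0 := fun j => (measure_ball_pos _ _ one_pos).ne'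
  have fin : ∀ j : ℕ, volume (ball (0 : EE j) 1) ≠ ∞ := fun j => measure_ball_lt_top.ne
  have hB1 : volume (ball (0 : EE (M + 1)) 1) = I * B0 := g_vol_slice M (by positivity)
  have hI0 : I ≠ 0 := fun h => pos (M + 1) (by rw [hB1, h, zero_mul])
  have hIt : I ≠ ∞ := fun h => fin (M + 1) (by rw [hB1, h, ENNReal.top_mul (pos M)])
  have hσe : σ = ((k + 2 : ℕ) : ℝ≥0∞) * w := by rw [hσ, Measure.toSphere_apply_univ]; simp [hw]
  have hσ0 : σ ≠ 0 := by rw [hσe]; exact mul_ne_zero (by simp) (pos _)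
  have hσt : σ ≠ ∞ := by rw [hσe]; exact ENNReal.mul_ne_top (by simp) (fin _)
  -- the ball
  have hball : 2 * w ^ (k + 2) = I * c * σ := by
    rw [← g_BP2 (measurableSet_ball) b hb]
    simp only [gK_ball]
    have : ∀ t : ℝ, gF (ball (0 : EE (k + 1)) √(1 - t ^ 2)) = ENNReal.ofReal √(1 - t ^ 2) ^ M * c := fun t =>
      gF_ball' (by omega) (Real.sqrt_nonneg _)
    simp only [this]
    rw [lintegral_mul_const _ (by fun_prop), lintegral_const]
  have hw0 : 2 * w ^ (k + 2) ≠ 0 := mul_ne_zero (by simp) (pow_ne_zero _ (pos _))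
  have hwt : 2 * w ^ (k + 2) ≠ ∞ := ENNReal.mul_ne_top (by simp) (ENNReal.pow_ne_top (fin _))
  have hc0 : c ≠ 0 := fun h => hw0 (by rw [hball, h]; simp)
  have hct : c ≠ ∞ := fun h => hwt (by rw [hball, h, ENNReal.mul_top hI0, ENNReal.top_mul hσ0])
  -- main
  set X := ∫⁻ θ, (∫⁻ t : ℝ, sectVol (k + 2) S θ t ^ (k + 3)) ∂((volume : Measure (EE (k + 2))).toSphere) with hX
  have hvi : (v ^ (k + 3))⁻¹ ≠ ∞ := ENNReal.inv_ne_top.2 (pow_ne_zero _ (pos _))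
  have hq : c * (v ^ (k + 3))⁻¹ ≠ ∞ := ENNReal.mul_ne_top hct hvi
  have h1 : c * (v ^ (k + 3))⁻¹ * X ≤ 2 * volume S ^ (k + 2) := by
    rw [← g_BP2 hS b hb, hX, ← lintegral_const_mul' _ _ hq]
    refine lintegral_mono fun θ => ?_
    dsimp only
    rw [← lintegral_const_mul' _ _ hq]
    refine lintegral_mono fun t => ?_
    dsimp only
    rw [g_sectVol hS θ (b θ) (hb θ) t]
    refine le_trans (le_of_eq ?_) (g_lower (gK_meas (b θ).repr hS t) (gK_bdd (b θ).repr hSb t))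
    rw [div_eq_mul_inv, mul_pow, ENNReal.inv_pow]
    ring
  have hLHS : (∫⁻ θ, (∫⁻ t : ℝ, sectVol (k + 2) S θ t ^ (k + 3)) ∂(sphMeasure (k + 2))) = σ⁻¹ * X := by
    rw [sphMeasure, lintegral_smul_measure]; rfl
  rw [hLHS, hB1]
  have hcc : c⁻¹ * c = 1 := ENNReal.inv_mul_cancel hc0 hct
  have hvv : v ^ (k + 3) * (v ^ (k + 3))⁻¹ = 1 :=
    ENNReal.mul_inv_cancel (pow_ne_zero _ (pos _)) (ENNReal.pow_ne_top (fin _))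
  have hss : σ⁻¹ * σ = 1 := ENNReal.inv_mul_cancel hσ0 hσt
  calc σ⁻¹ * X = σ⁻¹ * c⁻¹ * v ^ (k + 3) * (c * (v ^ (k + 3))⁻¹ * X) := by
        calc σ⁻¹ * X = (c⁻¹ * c) * (v ^ (k + 3) * (v ^ (k + 3))⁻¹) * (σ⁻¹ * X) := by rw [hcc, hvv]; simp
          _ = _ := by ring
    _ ≤ σ⁻¹ * c⁻¹ * v ^ (k + 3) * (2 * volume S ^ (k + 2)) := by gcongr
    _ = (σ⁻¹ * c⁻¹ * v ^ (k + 3) * 2) * volume S ^ (k + 2) := by ring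
    _ = _ := by
      congr 1
      rw [ENNReal.eq_div_iff (mul_ne_zero (pow_ne_zero _ (pos _)) (pos _))
        (ENNReal.mul_ne_top (ENNReal.pow_ne_top (fin _)) (fin _))]
      calc _ = (2 * w ^ (k + 2)) * (σ⁻¹ * c⁻¹) * (v ^ (k + 3) * B0) := by ring
        _ = (c⁻¹ * c) * (σ⁻¹ * σ) * (v ^ (k + 3) * (I * B0)) := by rw [hball]; ring
        _ = _ := by rw [hcc, hss]; simp

/-- Gardner's sharp affine inequality for hyperplane sections of a bounded Borel set
(case `k = n-1`). -/
theorem stmt10 (n : ℕ) (hn : 2 ≤ n) (S : Set (EuclideanSpace ℝ (Fin n)))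
    (hS : MeasurableSet S) (hSb : Bornology.IsBounded S) :
    (∫⁻ θ, ∫⁻ t : ℝ, sectVol n S θ t ^ (n + 1) ∂volume ∂(sphMeasure n)) ≤
      ENNReal.ofReal (ballVol (n - 1) ^ (n + 1) * ballVol (n ^ 2) /
          (ballVol n ^ n * ballVol (n ^ 2 - 1))) *
        volume S ^ n := by
  obtain ⟨k, rfl⟩ : ∃ k, n = k + 2 := ⟨n - 2, by omega⟩
  refine (g_main k S hS hSb).trans (le_of_eq ?_)
  have e1 : (k + 2) ^ 2 = (k + 3) * (k + 1) + 1 := by ring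
  have p := g_ballVol_pos
  have p1 := p (k + 1)
  have p2 := p ((k + 3) * (k + 1) + 1)
  have p3 := p (k + 2)
  have p4 := p ((k + 3) * (k + 1))
  rw [e1, show k + 2 - 1 = k + 1 from rfl, Nat.add_sub_cancel, ENNReal.ofReal_div_of_pos (by positivity),
    ENNReal.ofReal_mul (by positivity), ENNReal.ofReal_mul (by positivity), ENNReal.ofReal_pow p1.le,
    ENNReal.ofReal_pow p3.le, g_ballVol _ (by omega), g_ballVol _ (by omega), g_ballVol _ (by omega),
    g_ballVol _ (by positivity)]
end
end
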